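/- arXiv:1903.06534 — 10 statements merged into one kernel-verified Lean document; each statement's English description precedes it below -/
import Mathlib

section
/- Let d and e be positive integers. There exists a function f(d,e) such that the following holds: if G is a finite soluble group of odd order of derived length at most d admitting an involutory automorphism φ with G = [G, φ] and x^e = 1 for every x ∈ G_{-φ}, then the exponent of G is at most f(d,e). -/
/-!
The exponent is bounded by induction on the derived length, and the bound is `expBound e (d - 1)`.

Let `A` be the last term of the derived series of `G` and suppose that `G ⧸ A` has exponent
dividing `m`. Let `N` be the normal closure of the elements `a⁻¹ * φ a` with `a ∈ A`; as `N` lies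
in the abelian group `A` and is generated by conjugates of elements of `G_{-φ}`, it has exponent
dividing `e`. Modulo `N`, the automorphism `φ` fixes `A` pointwise. If `φ` fixes both `a` and
`g⁻¹ * a * g`, then `g * (φ g)⁻¹` centralizes `a`; hence `G = [G, φ]` centralizes `A` modulo `N`.

Now `A` is generated by commutators `⁅x, y⁆` which are central modulo `N`, and therefore
`⁅x, y⁆ ^ m` is congruent to `⁅x ^ m, y⁆`, which is trivial modulo `N` because `x ^ m ∈ A`. So
`⁅x, y⁆ ^ (m * e) = 1`, the abelian group `A` has exponent dividing `m * e`, and `G` has exponent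
dividing `m * (m * e)`. The induction is carried out for an arbitrary
endomorphism `φ` of an arbitrary group, so that it passes to quotients directly.
-/

/-- The fixed-point subgroup `G_φ = {g ∈ G : φ(g) = g}` of an automorphism `φ`. -/
def fixedSubgroup {G : Type*} [Group G] (φ : G ≃* G) : Subgroup G where
  carrier := {g | φ g = g}
  one_mem' := map_one φ
  mul_mem' := by
    intro a b ha hb
    simp only [Set.mem_setOf_eq, map_mul] at *
    rw [ha, hb]
  inv_mem' := by
    intro a ha
    simp only [Set.mem_setOf_eq, map_inv] at *
    rw [ha]

/-- The set `G_{-φ} = {g⁻¹ · φ(g) : g ∈ G}`. -/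
def negSet {G : Type*} [Group G] (φ : G ≃* G) : Set G := {x | ∃ g : G, x = g⁻¹ * φ g}

open scoped commutatorElement

/-- The bound on the exponent for derived length at most `k + 1`. -/
def expBound (e : ℕ) : ℕ → ℕ
  | 0 => e
  | k + 1 => expBound e k * (expBound e k * e)

theorem expBound_pos {e : ℕ} (he : 0 < e) : ∀ k, 0 < expBound e k
  | 0 => he
  | k + 1 => Nat.mul_pos (expBound_pos he k) (Nat.mul_pos (expBound_pos he k) he)

theorem pow_eq_one_of_mem_closure {G : Type*} [Group G] (A : Subgroup G)
    (hA : ∀ a ∈ A, ∀ b ∈ A, a * b = b * a) (S : Set G) (hS : S ⊆ A) (k : ℕ)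
    (hk : ∀ x ∈ S, x ^ k = 1) {x : G} (hx : x ∈ Subgroup.closure S) : x ^ k = 1 := by
  have key : x ∈ A ∧ x ^ k = 1 := by
    induction hx using Subgroup.closure_induction with
    | mem x hx => exact ⟨hS hx, hk x hx⟩
    | one => exact ⟨A.one_mem, one_pow k⟩
    | mul x y _ _ hx hy =>
      refine ⟨A.mul_mem hx.1 hy.1, ?_⟩
      have hc : Commute x y := hA x hx.1 y hy.1
      rw [hc.mul_pow, hx.2, hy.2, one_mul]
    | inv x _ hx => exact ⟨A.inv_mem hx.1, by rw [inv_pow, hx.2, inv_one]⟩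
  exact key.2

/-- If `⁅x, y⁆` commutes with `x`, then taking powers in the first argument of the
commutator is multiplicative. -/
theorem commutator_pow_left {G : Type*} [Group G] {x y : G} (hx : Commute ⁅x, y⁆ x)
    (m : ℕ) : ⁅x, y⁆ ^ m = ⁅x ^ m, y⁆ := by
  -- `y * x⁻¹ * y⁻¹ = x⁻¹ * ⁅x, y⁆`, a product of two commuting elements.
  have h1 : y * x⁻¹ * y⁻¹ = x⁻¹ * ⁅x, y⁆ := by
    rw [commutatorElement_def]; group
  have h2 : ⁅x ^ m, y⁆ = x ^ m * (y * x⁻¹ * y⁻¹) ^ m := by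
    rw [conj_pow, commutatorElement_def, inv_pow]; group
  rw [h2, h1, (hx.symm.inv_left).mul_pow, inv_pow, mul_inv_cancel_left]

/-- If a homomorphism `π` identifies `a` with `φ a` for all `a` in the normal subgroup `A`, and the
elements `g⁻¹ * φ g` generate `G`, then `π` maps `A` into the centre of the image of `G`. -/
theorem commute_of_fixed {G H : Type*} [Group G] [Group H] (φ : G →* G) (π : G →* H)
    (A : Subgroup G) [hn : A.Normal] (hfix : ∀ a ∈ A, π (φ a) = π a)
    (hgen : Subgroup.closure {x | ∃ g : G, x = g⁻¹ * φ g} = ⊤) (a : G) (ha : a ∈ A) (g : G) :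
    Commute (π a) (π g) := by
  have hle : Subgroup.closure {x | ∃ g : G, x = g⁻¹ * φ g} ≤
      (Subgroup.centralizer {π a}).comap π := by
    rw [Subgroup.closure_le]
    rintro _ ⟨h, rfl⟩
    simp only [Subgroup.coe_comap, Set.mem_preimage, SetLike.mem_coe,
      Subgroup.mem_centralizer_singleton_iff]
    have h1 := hfix _ (hn.conj_mem a ha h)
    simp only [map_mul, map_inv, hfix a ha] at h1 ⊢
    calc (π h)⁻¹ * π (φ h) * π a
        = (π h)⁻¹ * (π (φ h) * π a * (π (φ h))⁻¹) * π (φ h) := by group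
      _ = π a * ((π h)⁻¹ * π (φ h)) := by rw [h1]; group
  have hg : g ∈ (Subgroup.centralizer {π a}).comap π := hle (hgen ▸ Subgroup.mem_top g)
  exact (Subgroup.mem_centralizer_singleton_iff.1 hg).symm

theorem pow_expBound_eq_one (e k : ℕ) : ∀ (G : Type) [Group G] (φ : G →* G),
    derivedSeries G (k + 1) = ⊥ →
    Subgroup.closure {x | ∃ g : G, x = g⁻¹ * φ g} = ⊤ →
    (∀ g : G, (g⁻¹ * φ g) ^ e = 1) → ∀ x : G, x ^ expBound e k = 1 := by
  induction k with
  | zero =>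
    intro G _ φ hd hgen he x
    refine pow_eq_one_of_mem_closure ⊤ (fun a _ b _ => ?_) _ (Set.subset_univ _) e ?_
      (hgen ▸ Subgroup.mem_top x)
    · have h : ⁅a, b⁆ ∈ derivedSeries G 1 := by
        rw [derivedSeries_succ]
        exact Subgroup.commutator_mem_commutator (by simp) (by simp)
      rw [hd, Subgroup.mem_bot] at h
      exact commutatorElement_eq_one_iff_mul_comm.1 h
    · rintro _ ⟨g, rfl⟩
      exact he g
  | succ k ih =>
    intro G _ φ hd hgen he x
    set A := derivedSeries G (k + 1) with hAdef
    have hAc : ∀ a ∈ A, ∀ b ∈ A, a * b = b * a := by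
      intro a ha b hb
      have h : ⁅a, b⁆ ∈ derivedSeries G (k + 1 + 1) := by
        rw [derivedSeries_succ]
        exact Subgroup.commutator_mem_commutator ha hb
      rw [hd, Subgroup.mem_bot] at h
      exact commutatorElement_eq_one_iff_mul_comm.1 h
    have hφA : ∀ a ∈ A, φ a ∈ A := fun a ha =>
      map_derivedSeries_le_derivedSeries φ (k + 1) (Subgroup.mem_map_of_mem φ ha)
    have hAn : A.Normal := derivedSeries_normal G (k + 1)
    -- The induction hypothesis for `G ⧸ A` with the endomorphism induced by `φ`.
    have hquot : ∀ g : G, g ^ expBound e k ∈ A := by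
      intro g
      have h := ih (G ⧸ A) (QuotientGroup.map A A φ hφA) ?_ ?_ ?_ (g : G ⧸ A)
      · rwa [← QuotientGroup.mk_pow, QuotientGroup.eq_one_iff] at h
      · rw [← map_derivedSeries_eq (QuotientGroup.mk'_surjective A), ← hAdef]
        exact QuotientGroup.map_mk'_self A
      · rw [eq_top_iff, ← Subgroup.map_top_of_surjective _ (QuotientGroup.mk'_surjective A),
          ← hgen, MonoidHom.map_closure]
        refine Subgroup.closure_mono ?_
        rintro _ ⟨_, ⟨g, rfl⟩, rfl⟩
        exact ⟨(g : G ⧸ A), rfl⟩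
      · intro q
        induction q using QuotientGroup.induction_on with
        | H g => exact congrArg (QuotientGroup.mk (s := A)) (he g)
    set S : Set G := {x | ∃ a ∈ A, x = a⁻¹ * φ a} with hS
    have hNe : ∀ x ∈ Subgroup.normalClosure S, x ^ e = 1 := by
      intro x hx
      refine pow_eq_one_of_mem_closure A hAc (Group.conjugatesOfSet S) ?_ e ?_ hx
      · refine Group.conjugatesOfSet_subset ?_
        rintro _ ⟨a, ha, rfl⟩
        exact A.mul_mem (A.inv_mem ha) (hφA a ha)
      · intro y hy
        obtain ⟨_, ⟨a, ha, rfl⟩, hc⟩ := Group.mem_conjugatesOfSet_iff.1 hy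
        obtain ⟨c, rfl⟩ := isConj_iff.1 hc
        rw [conj_pow, he a, mul_one, mul_inv_cancel]
    have hcent := commute_of_fixed φ (QuotientGroup.mk' (Subgroup.normalClosure S)) A
      (fun a ha => ((QuotientGroup.eq (s := Subgroup.normalClosure S)).2
        (Subgroup.subset_normalClosure (s := S) ⟨a, ha, rfl⟩)).symm) hgen
    have hA : ∀ a ∈ A, a ^ (expBound e k * e) = 1 := by
      intro a ha
      rw [hAdef, derivedSeries_succ, Subgroup.commutator_def] at ha
      have hmem : ∀ x ∈ derivedSeries G k, ∀ y ∈ derivedSeries G k, ⁅x, y⁆ ∈ A := by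
        intro x hx y hy
        rw [hAdef, derivedSeries_succ]
        exact Subgroup.commutator_mem_commutator hx hy
      refine pow_eq_one_of_mem_closure A hAc _ ?_ _ ?_ ha
      · rintro _ ⟨x, hx, y, hy, rfl⟩
        exact hmem x hx y hy
      · rintro _ ⟨x, hx, y, hy, rfl⟩
        rw [pow_mul]
        apply hNe
        rw [← QuotientGroup.eq_one_iff]
        have h1 := hcent _ (hmem x hx y hy) x
        rw [map_commutatorElement] at h1
        have h2 := commutator_pow_left h1 (expBound e k)
        rw [← map_pow, commutatorElement_eq_one_iff_commute.2 (hcent _ (hquot x) y),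
          ← map_commutatorElement, ← map_pow] at h2
        exact h2
    change x ^ (expBound e k * (expBound e k * e)) = 1
    rw [pow_mul]
    exact hA _ (hquot x)

theorem exponent_bounded_of_soluble :
    ∃ f : ℕ → ℕ → ℕ, ∀ (d e : ℕ), 0 < d → 0 < e →
      ∀ (G : Type) [Group G] [Finite G] (φ : G ≃* G),
      (∀ g, φ (φ g) = g) → Odd (Nat.card G) →
      derivedSeries G d = ⊥ →
      Subgroup.closure (negSet φ) = ⊤ →
      (∀ x ∈ negSet φ, x ^ e = 1) →
      Monoid.exponent G ≤ f d e := by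
  refine ⟨fun d e => expBound e (d - 1), ?_⟩
  intro d e hd he G _ _ φ _ _ hder hgen hexp
  obtain ⟨k, rfl⟩ : ∃ k, d = k + 1 := ⟨d - 1, by omega⟩
  refine Nat.le_of_dvd (expBound_pos he _) (Monoid.exponent_dvd_of_forall_pow_eq_one ?_)
  exact pow_expBound_eq_one e k G φ.toMonoidHom hder hgen (fun g => hexp _ ⟨g, rfl⟩)
end

section
/- Let G be a finite group of odd order with an involutory automorphism φ such that G = [G, φ]. Let S be the set of those elements h ∈ G_φ for which there exist x, y ∈ G_{-φ} such that h ∈ ⟨x, y⟩. Then G_φ = ⟨S⟩, i.e., the fixed-point subgroup G_φ is generated by S. -/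
/-- In a group of odd order, `g ^ ((|G| + 1) / 2)` is a square root of `g`. -/
lemma pow_half_mul_self {G : Type*} [Group G] (hodd : Odd (Nat.card G)) (g : G) :
    g ^ ((Nat.card G + 1) / 2) * g ^ ((Nat.card G + 1) / 2) = g := by
  obtain ⟨k, hk⟩ := hodd
  have h : (Nat.card G + 1) / 2 + (Nat.card G + 1) / 2 = Nat.card G + 1 := by omega
  rw [← pow_add, h, pow_succ, pow_card_eq_one', one_mul]

lemma mem_negSet_iff {G : Type*} [Group G] {φ : G ≃* G} (hφ : ∀ g, φ (φ g) = g)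
    (hodd : Odd (Nat.card G)) {x : G} : x ∈ negSet φ ↔ φ x = x⁻¹ := by
  constructor
  · rintro ⟨g, rfl⟩
    simp [hφ]
  · intro hx
    refine ⟨(x ^ ((Nat.card G + 1) / 2))⁻¹, ?_⟩
    rw [map_inv, map_pow, hx, inv_pow, inv_inv, pow_half_mul_self hodd]

/-- A product of two inverted elements is an inverted element times a fixed element, with the fixed
factor in the subgroup generated by the two. -/
lemma exists_inverted_mul_fixed {G : Type*} [Group G] {φ : G ≃* G} (hodd : Odd (Nat.card G))
    {x y : G} (hx : φ x = x⁻¹) (hy : φ y = y⁻¹) :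
    ∃ z h : G, φ z = z⁻¹ ∧ φ h = h ∧ h ∈ Subgroup.closure {x, y} ∧ x * y = z * h := by
  have hsq := pow_half_mul_self hodd (x * y * y * x)
  have hz : φ ((x * y * y * x) ^ ((Nat.card G + 1) / 2)) =
      ((x * y * y * x) ^ ((Nat.card G + 1) / 2))⁻¹ := by
    rw [map_pow, ← inv_pow]
    simp [hx, hy, mul_assoc]
  have hxm : x ∈ Subgroup.closure {x, y} := Subgroup.subset_closure (by simp)
  have hym : y ∈ Subgroup.closure {x, y} := Subgroup.subset_closure (by simp)
  have hzm : (x * y * y * x) ^ ((Nat.card G + 1) / 2) ∈ Subgroup.closure {x, y} :=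
    pow_mem (mul_mem (mul_mem (mul_mem hxm hym) hym) hxm) _
  generalize (x * y * y * x) ^ ((Nat.card G + 1) / 2) = z at hsq hz hzm
  refine ⟨z, z⁻¹ * (x * y), hz, ?_, mul_mem (inv_mem hzm) (mul_mem hxm hym), by group⟩
  rw [map_mul, map_inv, map_mul, hz, hx, hy, inv_inv, eq_inv_mul_iff_mul_eq, ← mul_assoc, hsq]
  group

theorem fixed_points_generated_by_two_generator_elements
    (G : Type*) [Group G] [Finite G] (φ : G ≃* G)
    (hφ : ∀ g, φ (φ g) = g) (hodd : Odd (Nat.card G))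
    (hG : Subgroup.closure (negSet φ) = ⊤) :
    Subgroup.closure {h : G | h ∈ fixedSubgroup φ ∧
        ∃ x ∈ negSet φ, ∃ y ∈ negSet φ, h ∈ Subgroup.closure {x, y}} =
      fixedSubgroup φ := by
  have hle : Subgroup.closure {h : G | h ∈ fixedSubgroup φ ∧
      ∃ x ∈ negSet φ, ∃ y ∈ negSet φ, h ∈ Subgroup.closure {x, y}} ≤ fixedSubgroup φ :=
    (Subgroup.closure_le _).2 fun h hh => hh.1
  refine le_antisymm hle fun g hg => ?_
  have hgen : ∀ x y h : G, φ x = x⁻¹ → φ y = y⁻¹ → φ h = h → h ∈ Subgroup.closure {x, y} →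
      h ∈ Subgroup.closure {h : G | h ∈ fixedSubgroup φ ∧
        ∃ x ∈ negSet φ, ∃ y ∈ negSet φ, h ∈ Subgroup.closure {x, y}} :=
    fun x y h hx hy hh hm => Subgroup.subset_closure
      ⟨hh, x, (mem_negSet_iff hφ hodd).2 hx, y, (mem_negSet_iff hφ hodd).2 hy, hm⟩
  generalize Subgroup.closure {h : G | h ∈ fixedSubgroup φ ∧
        ∃ x ∈ negSet φ, ∃ y ∈ negSet φ, h ∈ Subgroup.closure {x, y}} = H at hle hgen ⊢
  have step : ∀ x a : G, φ x = x⁻¹ → (∃ z, φ z = z⁻¹ ∧ ∃ h ∈ H, a = z * h) →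
      ∃ z, φ z = z⁻¹ ∧ ∃ h ∈ H, x * a = z * h := by
    rintro x _ hx ⟨y, hy, k, hk, rfl⟩
    obtain ⟨z, h, hz, hh, hm, heq⟩ := exists_inverted_mul_fixed hodd hx hy
    exact ⟨z, hz, h * k, mul_mem (hgen x y h hx hy hh hm) hk, by
      rw [← mul_assoc, heq, mul_assoc]⟩
  have key : ∃ z, φ z = z⁻¹ ∧ ∃ h ∈ H, g = z * h := by
    clear hg
    have hgt : g ∈ Subgroup.closure (negSet φ) := hG ▸ Subgroup.mem_top g
    induction hgt using Subgroup.closure_induction_left with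
    | one => exact ⟨1, by simp, 1, one_mem H, by simp⟩
    | mul_left x hx a _ ih => exact step x a ((mem_negSet_iff hφ hodd).1 hx) ih
    | inv_mul_cancel x hx a _ ih =>
      exact step x⁻¹ a (by rw [map_inv, (mem_negSet_iff hφ hodd).1 hx]) ih
  obtain ⟨z, hz, h, hh, rfl⟩ := key
  have hzf : φ z = z := by
    have := (Subgroup.mul_mem_cancel_right _ (hle hh)).1 hg
    exact this
  have hz1 : z = 1 := by
    have hzz : z * z = 1 := by
      rw [hzf] at hz
      exact mul_eq_one_iff_eq_inv.2 hz
    -- With `n = (|G| + 1) / 2`, one has `z = z ^ n * z ^ n = (z * z) ^ n = 1`.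
    rw [← pow_half_mul_self hodd z, ← (Commute.refl z).mul_pow, hzz, one_pow]
  rw [hz1, one_mul]
  exact hh
end

section
/- Let e and r be positive integers. There exists a function f(e,r) such that every finite group G whose exponent divides e and whose rank is at most r satisfies |G| ≤ f(e,r). -/
/-- A group `K` has rank at most `r` if every subgroup of `K` is generated
by at most `r` elements. -/
def rankLE (K : Type*) [Group K] (r : ℕ) : Prop :=
  ∀ H : Subgroup K, ∃ S : Finset K, S.card ≤ r ∧ Subgroup.closure (S : Set K) = H

/-- A maximal abelian normal subgroup `A` of a finite nilpotent group is self-centralizing. Otherwise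
take the least `n` for which the centralizer `C` of `A` contains an element `x` of the `n`-th term of
the upper central series outside `A`. Minimality of `n` puts every commutator `⁅x, g⁆` in `A`, so
that `A ⊔ ⟨x⟩` is a strictly larger abelian normal subgroup. -/
theorem exists_selfCentralizing (P : Type*) [Group P] [Finite P] [Group.IsNilpotent P] :
    ∃ A : Subgroup P, A.Normal ∧ IsMulCommutative A ∧
      Subgroup.centralizer (A : Set P) ≤ A := by
  obtain ⟨A, hA⟩ := (Set.toFinite {A : Subgroup P | A.Normal ∧ IsMulCommutative A}).exists_maximal
    ⟨⊥, inferInstance, inferInstance⟩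
  obtain ⟨hAn, hAc⟩ := hA.prop
  refine ⟨A, hAn, hAc, ?_⟩
  have key : ∀ n, ∀ x ∈ Subgroup.centralizer (A : Set P),
      x ∈ Subgroup.upperCentralSeries P n → x ∈ A := by
    intro n
    induction n with
    | zero =>
      intro x _ hx
      rw [Subgroup.upperCentralSeries_zero, Subgroup.mem_bot] at hx
      exact hx ▸ A.one_mem
    | succ n ih =>
      intro x hxC hx
      have hcomm : ∀ g : P, x * g * x⁻¹ * g⁻¹ ∈ A := fun g => by
        refine ih _ ?_ (Subgroup.mem_upperCentralSeries_succ_iff.1 hx g)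
        have := (inferInstance : (Subgroup.centralizer (A : Set P)).Normal).conj_mem _
          (inv_mem hxC) g
        have h2 := mul_mem hxC this
        simpa [mul_assoc] using h2
      have hxA : ∀ a ∈ A, a * x = x * a := fun a ha => Subgroup.mem_centralizer_iff.1 hxC a ha
      have hN : (Subgroup.closure ((A : Set P) ∪ {x})).Normal := by
        refine ⟨fun y hy g => ?_⟩
        induction hy using Subgroup.closure_induction with
        | mem y hy =>
          rcases hy with hy | rfl
          · exact Subgroup.subset_closure (Or.inl (hAn.conj_mem y hy g))
          · have h1 := mul_mem (Subgroup.subset_closure (k := (A : Set P) ∪ {y})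
                (Or.inl (inv_mem (hcomm g))))
              (Subgroup.subset_closure (k := (A : Set P) ∪ {y}) (Or.inr rfl))
            simpa [mul_assoc] using h1
        | one => simp
        | mul a b _ _ ha hb => simpa [mul_assoc] using mul_mem ha hb
        | inv a _ ha => simpa [mul_assoc] using inv_mem ha
      have hC : IsMulCommutative (Subgroup.closure ((A : Set P) ∪ {x})) := by
        refine Subgroup.isMulCommutative_closure ?_
        rintro a (ha | rfl) b (hb | rfl)
        · exact congrArg Subtype.val (mul_comm' (⟨a, ha⟩ : A) ⟨b, hb⟩)
        · exact hxA a ha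
        · exact (hxA b hb).symm
        · rfl
      have hle : A ≤ Subgroup.closure ((A : Set P) ∪ {x}) :=
        fun a ha => Subgroup.subset_closure (Or.inl ha)
      exact hA.le_of_ge ⟨hN, hC⟩ hle (Subgroup.subset_closure (Or.inr rfl))
  obtain ⟨n, hn⟩ := Group.IsNilpotent.nilpotent P
  exact fun x hx => key n x hx (hn ▸ Subgroup.mem_top x)

theorem card_le_of_selfCentralizing {P : Type*} [Group P] [Finite P] (A : Subgroup P) [A.Normal]
    (h : Subgroup.centralizer (A : Set P) ≤ A) :
    Nat.card P ≤ Nat.card A * (Nat.card A).factorial := by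
  rw [← A.card_mul_index]
  refine Nat.mul_le_mul_left _ ?_
  let φ : P →* MulAut A := MulAut.conjNormal
  have hker : φ.ker ≤ A := by
    intro g hg
    refine h (Subgroup.mem_centralizer_iff.2 fun a ha => ?_)
    have h1 : ((φ g ⟨a, ha⟩ : A) : P) = a := by
      rw [MonoidHom.mem_ker.1 hg]; rfl
    rw [MulAut.conjNormal_apply] at h1
    exact (mul_inv_eq_iff_eq_mul.1 h1).symm
  calc A.index ≤ φ.ker.index :=
        Nat.le_of_dvd (Nat.pos_of_ne_zero Subgroup.index_ne_zero_of_finite)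
          (Subgroup.index_dvd_of_le hker)
    _ = Nat.card φ.range := Subgroup.index_ker φ
    _ ≤ Nat.card (MulAut A) := Subgroup.card_le_card_group _
    _ ≤ Nat.card (Equiv.Perm A) :=
        Nat.card_le_card_of_injective (fun f : MulAut A => f.toEquiv)
          MulEquiv.toEquiv_injective
    _ = _ := Nat.card_perm

theorem card_le_of_isMulCommutative {G : Type*} [Group G] [Finite G] {e r : ℕ} (he : 0 < e)
    (hexp : Monoid.exponent G ∣ e) (hr : rankLE G r) (A : Subgroup G) [IsMulCommutative A] :
    Nat.card A ≤ e ^ r := by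
  obtain ⟨S, hS, hSA⟩ := hr A
  have hrank : Group.rank A ≤ r := by
    subst hSA
    exact (Subgroup.rank_closure_finset_le_card S).trans hS
  have hpow : ∀ a : A, a ^ e = 1 := fun a => Subtype.ext <| by
    simpa using Monoid.exponent_dvd_iff_forall_pow_eq_one.1 hexp (a : G)
  letI : CommGroup A := { (inferInstance : Group A) with mul_comm := mul_comm' }
  have hdvd := card_dvd_exponent_pow_rank' A hpow
  exact (Nat.le_of_dvd (pow_pos he _) hdvd).trans (Nat.pow_le_pow_right he hrank)

theorem card_le_of_isNilpotent {G : Type*} [Group G] [Finite G] {e r : ℕ} (he : 0 < e)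
    (hexp : Monoid.exponent G ∣ e) (hr : rankLE G r) (P : Subgroup G) [Group.IsNilpotent P] :
    Nat.card P ≤ e ^ r * (e ^ r).factorial := by
  obtain ⟨A, hAn, hAc, hA⟩ := exists_selfCentralizing P
  have hcard : Nat.card A ≤ e ^ r := by
    have := card_le_of_isMulCommutative he hexp hr (A.map P.subtype)
    rwa [Subgroup.card_map_of_injective P.subtype_injective] at this
  exact (card_le_of_selfCentralizing A hA).trans
    (Nat.mul_le_mul hcard (Nat.factorial_le hcard))

theorem card_bounded_of_exponent_and_rank :
    ∃ f : ℕ → ℕ → ℕ, ∀ (e r : ℕ), 0 < e → 0 < r →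
      ∀ (G : Type) [Group G] [Finite G],
      Monoid.exponent G ∣ e → rankLE G r →
      Nat.card G ≤ f e r := by
  refine ⟨fun e r => (e ^ r * (e ^ r).factorial) ^ e, ?_⟩
  intro e r he _ G _ _ hexp hr
  have hB : 0 < e ^ r * (e ^ r).factorial := Nat.mul_pos (pow_pos he _) (Nat.factorial_pos _)
  have hprimes : (Nat.card G).primeFactors ⊆ Finset.Icc 1 e := by
    intro p hp
    have hpp := Nat.prime_of_mem_primeFactors hp
    have : Fact p.Prime := ⟨hpp⟩
    obtain ⟨x, hx⟩ := exists_prime_orderOf_dvd_card' p (Nat.dvd_of_mem_primeFactors hp)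
    have hpe : p ∣ e := hx ▸ (Monoid.order_dvd_exponent x).trans hexp
    exact Finset.mem_Icc.2 ⟨hpp.one_le, Nat.le_of_dvd he hpe⟩
  have hsylow : ∀ p ∈ (Nat.card G).primeFactors,
      p ^ (Nat.card G).factorization p ≤ e ^ r * (e ^ r).factorial := by
    intro p hp
    have : Fact p.Prime := ⟨Nat.prime_of_mem_primeFactors hp⟩
    obtain ⟨P⟩ : Nonempty (Sylow p G) := inferInstance
    have : Group.IsNilpotent (P : Subgroup G) := P.isPGroup'.isNilpotent
    rw [← P.card_eq_multiplicity]
    exact card_le_of_isNilpotent he hexp hr (P : Subgroup G)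
  calc Nat.card G
      = ∏ p ∈ (Nat.card G).primeFactors, p ^ (Nat.card G).factorization p :=
        (Nat.prod_factorization_pow_eq_self Nat.card_pos.ne').symm
    _ ≤ (e ^ r * (e ^ r).factorial) ^ (Nat.card G).primeFactors.card :=
        Finset.prod_le_pow_card _ _ _ hsylow
    _ ≤ (e ^ r * (e ^ r).factorial) ^ e :=
        Nat.pow_le_pow_right hB (by simpa using Finset.card_le_card hprimes)
end

section
/- Let G be a finite group of odd order admitting an involutory automorphism φ, and let N be a φ-invariant normal subgroup of G such that either N = N_{-φ} (every element of N is of the form n⁻¹·φ(n) for some n ∈ N) or N = N_φ (φ fixes every element of N). Then [G, φ] centralizes N. -/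
/-- It suffices to treat the generators `g⁻¹ * φ g`: such an element commutes with `n` exactly when
`g` and `φ g` conjugate `n` to the same element. -/
theorem commute_of_conj_eq {G : Type*} [Group G] (φ : G ≃* G) (N : Subgroup G)
    (h : ∀ g, ∀ n ∈ N, φ g * n * (φ g)⁻¹ = g * n * g⁻¹) :
    ∀ x ∈ Subgroup.closure (negSet φ), ∀ n ∈ N, Commute x n := by
  intro x hx n hn
  have hle : Subgroup.closure (negSet φ) ≤ Subgroup.centralizer {n} := by
    rw [Subgroup.closure_le]
    rintro _ ⟨g, rfl⟩
    have hg : φ g * n = g * n * g⁻¹ * φ g := mul_inv_eq_iff_eq_mul.mp (h g n hn)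
    rw [SetLike.mem_coe, Subgroup.mem_centralizer_singleton_iff, mul_assoc, hg]
    group
  exact Subgroup.mem_centralizer_singleton_iff.mp (hle hx)

theorem centralizes_of_fixed_or_neg (G : Type*) [Group G] [Finite G]
    (φ : G ≃* G) (hφ : ∀ g, φ (φ g) = g) (hodd : Odd (Nat.card G))
    (N : Subgroup G) [N.Normal] (hinv : ∀ n ∈ N, φ n ∈ N)
    (h : {x : G | ∃ n ∈ N, x = n⁻¹ * φ n} = (N : Set G) ∨ ∀ n ∈ N, φ n = n) :
    ∀ x ∈ Subgroup.closure (negSet φ), ∀ n ∈ N, Commute x n := by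
  apply commute_of_conj_eq
  intro g n hn
  have hm : g * n * g⁻¹ ∈ N := Subgroup.Normal.conj_mem ‹_› n hn g
  rcases h with h | h
  · have hneg : ∀ n ∈ N, φ n = n⁻¹ := by
      intro n hn
      rw [← SetLike.mem_coe, ← h] at hn
      obtain ⟨k, -, rfl⟩ := hn
      simp [hφ]
    have key := hneg _ hm
    rw [map_mul, map_mul, map_inv, hneg n hn] at key
    rw [← inv_inj, ← key]
    group
  · have key := h _ hm
    rwa [map_mul, map_mul, map_inv, h n hn] at key
end

section
/- Let G be a finite group of odd order admitting an involutory automorphism φ. Then the normal closure in G of the fixed-point subgroup G_φ contains the derived subgroup G′ of G. -/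
theorem exists_fixed_mul_inverted {G : Type*} [Group G]
    (φ : G ≃* G) (hφ : ∀ g, φ (φ g) = g) (hodd : Odd (Nat.card G)) (g : G) :
    ∃ f s : G, φ f = f ∧ φ s = s⁻¹ ∧ g = f * s := by
  obtain ⟨k, hk⟩ := hodd
  set x := (φ g)⁻¹ * g with hx
  have hφx : φ x = x⁻¹ := by simp [hx, hφ]
  have hsq : x ^ (k + 1) * x ^ (k + 1) = x := by
    rw [← pow_add, show k + 1 + (k + 1) = (2 * k + 1) + 1 by ring, ← hk, pow_succ,
      pow_card_eq_one', one_mul]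
  have hφs : φ (x ^ (k + 1)) = (x ^ (k + 1))⁻¹ := by rw [map_pow, hφx, inv_pow]
  refine ⟨g * (x ^ (k + 1))⁻¹, x ^ (k + 1), ?_, hφs, by group⟩
  rw [map_mul, map_inv, hφs, inv_inv, eq_mul_inv_iff_mul_eq, mul_assoc, hsq, hx,
    mul_inv_cancel_left]

theorem mk_apply_eq_inv {G : Type*} [Group G]
    (φ : G ≃* G) (hφ : ∀ g, φ (φ g) = g) (hodd : Odd (Nat.card G)) (g : G) :
    (φ g : G ⧸ Subgroup.normalClosure (fixedSubgroup φ : Set G)) = (g : G ⧸ _)⁻¹ := by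
  obtain ⟨f, s, hf, hs, rfl⟩ := exists_fixed_mul_inverted φ hφ hodd g
  have h1 : (f : G ⧸ Subgroup.normalClosure (fixedSubgroup φ : Set G)) = 1 :=
    (QuotientGroup.eq_one_iff f).2 (Subgroup.subset_normalClosure hf)
  rw [map_mul, hf, hs, QuotientGroup.mk_mul, QuotientGroup.mk_mul, h1, QuotientGroup.mk_inv,
    one_mul, one_mul]

theorem commutator_le_normalClosure_fixed (G : Type*) [Group G] [Finite G]
    (φ : G ≃* G) (hφ : ∀ g, φ (φ g) = g) (hodd : Odd (Nat.card G)) :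
    commutator G ≤ Subgroup.normalClosure (fixedSubgroup φ : Set G) := by
  rw [commutator_def, Subgroup.commutator_le]
  intro a _ b _
  rw [← QuotientGroup.eq_one_iff]
  have h := mk_apply_eq_inv φ hφ hodd (a * b)
  rw [map_mul, QuotientGroup.mk_mul, mk_apply_eq_inv φ hφ hodd a, mk_apply_eq_inv φ hφ hodd b,
    QuotientGroup.mk_mul, ← mul_inv_rev, inv_inj] at h
  rw [commutatorElement_def, QuotientGroup.mk_mul, QuotientGroup.mk_mul, QuotientGroup.mk_mul,
    QuotientGroup.mk_inv, QuotientGroup.mk_inv, ← h]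
  group
end

section
/- Let G be a finite group of odd order admitting an involutory automorphism φ with G = [G, φ], and let e be a positive integer with x^e = 1 for every x ∈ G_{-φ}. If M is a φ-invariant abelian normal subgroup of G, then M^e = {m^e : m ∈ M} is contained in the center Z(G) of G. -/
theorem abelian_power_central (G : Type*) [Group G] [Finite G]
    (φ : G ≃* G) (hφ : ∀ g, φ (φ g) = g) (hodd : Odd (Nat.card G))
    (hG : Subgroup.closure (negSet φ) = ⊤)
    (e : ℕ) (he : 0 < e) (hexp : ∀ x ∈ negSet φ, x ^ e = 1)
    (M : Subgroup G) [M.Normal] (hMinv : ∀ m ∈ M, φ m ∈ M)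
    (hab : ∀ a ∈ M, ∀ b ∈ M, a * b = b * a) :
    ∀ m ∈ M, m ^ e ∈ Subgroup.center G := by
  have hfix : ∀ m ∈ M, φ (m ^ e) = m ^ e := by
    intro m hm
    have h := hexp _ ⟨m, rfl⟩
    have hc : Commute m⁻¹ (φ m) := hab _ (M.inv_mem hm) _ (hMinv m hm)
    rw [hc.mul_pow, inv_pow, inv_mul_eq_one] at h
    rw [map_pow, h]
  intro m hm
  have hle : Subgroup.closure (negSet φ) ≤ Subgroup.centralizer {m ^ e} := by
    rw [Subgroup.closure_le]
    rintro _ ⟨g, rfl⟩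
    rw [SetLike.mem_coe, Subgroup.mem_centralizer_singleton_iff]
    have h := hfix _ (Subgroup.Normal.conj_mem ‹M.Normal› m hm g)
    rw [conj_pow, map_mul, map_mul, hfix m hm, map_inv, mul_inv_eq_iff_eq_mul] at h
    calc g⁻¹ * φ g * m ^ e = g⁻¹ * (φ g * m ^ e) := by group
      _ = m ^ e * (g⁻¹ * φ g) := by rw [h]; group
  rw [Subgroup.mem_center_iff]
  intro g
  have hg : g ∈ Subgroup.centralizer {m ^ e} := hle (hG ▸ Subgroup.mem_top g)
  exact Subgroup.mem_centralizer_singleton_iff.mp hg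
end

section
/- Let p be an odd prime and c, d nonnegative integers. There exists a function f(c,d,p) such that the following holds: if G is a finite p-group admitting an involutory automorphism φ such that the fixed-point subgroup G_φ is nilpotent of class at most c, x^p = 1 for every x ∈ G_{-φ}, and the derived length of G is at most d, then the nilpotency class of [G, φ] is at most f(c,d,p). -/
/-! ### Iterated commutators and Hall's criterion -/

/-- The iterated commutator `[A, Z, …, Z]` with `n` entries equal to `Z`. -/
def itComm {G : Type*} [Group G] (A Z : Subgroup G) : ℕ → Subgroup G
  | 0 => A
  | n + 1 => ⁅itComm A Z n, Z⁆

section Hall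
variable {G : Type*} [Group G]

theorem itComm_normal (A Z : Subgroup G) [A.Normal] [Z.Normal] (n : ℕ) :
    (itComm A Z n).Normal := by
  induction n with
  | zero => assumption
  | succ n ih => exact Subgroup.commutator_normal _ _

theorem itComm_self (S : Subgroup G) (n : ℕ) : itComm S S n = S.lowerCentralSeries n := by
  induction n with
  | zero => rfl
  | succ n ih => rw [itComm, ih]; rfl

theorem lowerCentralSeries_normal' (S : Subgroup G) [S.Normal] (n : ℕ) :
    (S.lowerCentralSeries n).Normal := by
  rw [← itComm_self]; exact itComm_normal S S n

theorem itComm_mono {A B Z W : Subgroup G} (h : A ≤ B) (h' : Z ≤ W) (n : ℕ) :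
    itComm A Z n ≤ itComm B W n := by
  induction n with
  | zero => exact h
  | succ n ih => exact Subgroup.commutator_mono ih h'

theorem itComm_add (A Z : Subgroup G) (m n : ℕ) :
    itComm A Z (m + n) = itComm (itComm A Z m) Z n := by
  induction n with
  | zero => rfl
  | succ n ih => rw [← add_assoc, itComm, ih]; rfl

theorem itComm_antitone (A Z : Subgroup G) [A.Normal] [Z.Normal] {m n : ℕ} (h : m ≤ n) :
    itComm A Z n ≤ itComm A Z m := by
  induction n, h using Nat.le_induction with
  | base => rfl
  | succ n _ ih =>
    have := itComm_normal A Z n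
    exact Subgroup.commutator_le_left _ _ |>.trans ih

theorem map_itComm {H : Type*} [Group H] (f : G →* H) (A Z : Subgroup G) (n : ℕ) :
    (itComm A Z n).map f = itComm (A.map f) (Z.map f) n := by
  induction n with
  | zero => rfl
  | succ n ih => rw [itComm, Subgroup.map_commutator, ih]; rfl

/-- The elements `x` such that `⁅x, z⁆ ∈ Y` for all `z ∈ Z`, for a normal subgroup `Y`. -/
def relCentralizer (Z Y : Subgroup G) [Y.Normal] : Subgroup G :=
  (Subgroup.centralizer (Z.map (QuotientGroup.mk' Y) : Set (G ⧸ Y))).comap (QuotientGroup.mk' Y)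

theorem le_relCentralizer_iff (A Z Y : Subgroup G) [Y.Normal] :
    A ≤ relCentralizer Z Y ↔ ⁅A, Z⁆ ≤ Y := by
  rw [relCentralizer, ← Subgroup.map_le_iff_le_comap,
    ← Subgroup.commutator_eq_bot_iff_le_centralizer, ← Subgroup.map_commutator,
    Subgroup.map_eq_bot_iff, QuotientGroup.ker_mk']

/-- The three subgroups lemma modulo a normal subgroup `Y`. -/
theorem three_subgroups (A B C Y : Subgroup G) [Y.Normal]
    (h1 : ⁅⁅B, C⁆, A⁆ ≤ Y) (h2 : ⁅⁅C, A⁆, B⁆ ≤ Y) : ⁅⁅A, B⁆, C⁆ ≤ Y := by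
  have key : ∀ A B C : Subgroup G, ⁅⁅A, B⁆, C⁆ ≤ Y ↔
      ⁅⁅A.map (QuotientGroup.mk' Y), B.map (QuotientGroup.mk' Y)⁆,
        C.map (QuotientGroup.mk' Y)⁆ = ⊥ := by
    intro A B C
    rw [← Subgroup.map_commutator, ← Subgroup.map_commutator, Subgroup.map_eq_bot_iff,
      QuotientGroup.ker_mk']
  rw [key] at *
  exact Subgroup.commutator_commutator_eq_bot_of_rotate h1 h2

/-- A Leibniz rule for iterated commutators: `[[A, B], Z, …, Z]` is controlled by the commutators
`[[A, Z, …, Z], [B, Z, …, Z]]` in which the entries `Z` are distributed over `A` and `B`. -/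
theorem itComm_commutator_le (A B Z : Subgroup G) [A.Normal] [B.Normal] [Z.Normal] (n : ℕ) :
    itComm ⁅A, B⁆ Z n ≤
      ⨆ q ∈ Finset.HasAntidiagonal.antidiagonal n, ⁅itComm A Z q.1, itComm B Z q.2⁆ := by
  have hn : ∀ n, (⨆ q ∈ Finset.HasAntidiagonal.antidiagonal n,
      ⁅itComm A Z q.1, itComm B Z q.2⁆).Normal := by
    intro n
    refine @Subgroup.iSup_normal _ _ _ _ fun q => @Subgroup.iSup_normal _ _ _ _ fun _ => ?_
    have := itComm_normal A Z q.1
    have := itComm_normal B Z q.2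
    infer_instance
  induction n with
  | zero => simp [itComm]
  | succ n ih =>
    have := hn (n + 1)
    rw [itComm]
    refine (Subgroup.commutator_mono ih le_rfl).trans ?_
    rw [← le_relCentralizer_iff]
    refine iSup₂_le fun q hq => ?_
    rw [le_relCentralizer_iff]
    rw [Finset.HasAntidiagonal.mem_antidiagonal] at hq
    apply three_subgroups
    · refine le_trans ?_ (le_iSup₂ (q.1, q.2 + 1) (by simp; omega))
      rw [Subgroup.commutator_comm]
      exact le_rfl
    · refine le_trans ?_ (le_iSup₂ (q.1 + 1, q.2) (by simp; omega))
      rw [Subgroup.commutator_comm Z]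
      exact le_rfl

/-- If `Z` acts nilpotently on `L / [L, L]`, it acts nilpotently on each lower central factor of
`L`, because these are generated by images of tensor powers of `L / [L, L]`. -/
theorem itComm_lowerCentralSeries_le (L Z : Subgroup G) [L.Normal] [Z.Normal] (e : ℕ)
    (h : itComm L Z e ≤ ⁅L, L⁆) (j : ℕ) :
    itComm (L.lowerCentralSeries j) Z ((j + 1) * e) ≤ L.lowerCentralSeries (j + 1) := by
  have := lowerCentralSeries_normal' L
  induction j with
  | zero => simpa using h
  | succ j ih =>
    rw [Subgroup.lowerCentralSeries_succ]
    refine (itComm_commutator_le _ _ _ _).trans (iSup₂_le fun q hq => ?_)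
    rw [Finset.HasAntidiagonal.mem_antidiagonal] at hq
    -- the entries `Z` are numerous enough for one of the two factors to drop a step
    by_cases hq1 : (j + 1) * e ≤ q.1
    · exact Subgroup.commutator_mono ((itComm_antitone _ _ hq1).trans ih)
        (itComm_antitone _ _ (Nat.zero_le _))
    · have hq2 : e ≤ q.2 := by rw [add_mul (j + 1) 1 e] at hq; omega
      refine (Subgroup.commutator_mono (itComm_antitone _ _ (Nat.zero_le _))
        ((itComm_antitone _ _ hq2).trans h)).trans ?_
      have : (⁅L.lowerCentralSeries (j + 1), L⁆).Normal := Subgroup.commutator_normal _ _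
      rw [Subgroup.commutator_comm]
      apply three_subgroups
      · rw [Subgroup.commutator_comm L]; exact le_rfl
      · exact le_rfl

/-- The bound on the class in the version of Hall's criterion used here. -/
def hallBound (e s : ℕ) : ℕ := 1 + ∑ j ∈ Finset.range s, (j + 1) * e

/-- Hall's nilpotency criterion in the form needed here: if `Z / L` is abelian and `Z` acts
nilpotently on `L / [L, L]`, then the class of `Z` is bounded in terms of the class of `L`. -/
theorem hall_criterion (L Z : Subgroup G) [L.Normal] [Z.Normal] (e s : ℕ) (hZ : ⁅Z, Z⁆ ≤ L)
    (h : itComm L Z e ≤ ⁅L, L⁆) :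
    Z.lowerCentralSeries (hallBound e s) ≤ L.lowerCentralSeries s := by
  have key : itComm L Z (∑ j ∈ Finset.range s, (j + 1) * e) ≤ L.lowerCentralSeries s := by
    induction s with
    | zero => exact le_rfl
    | succ s ih =>
      rw [Finset.sum_range_succ, itComm_add]
      exact (itComm_mono ih le_rfl _).trans (itComm_lowerCentralSeries_le L Z e h s)
  rw [hallBound, ← itComm_self, itComm_add]
  exact (itComm_mono hZ le_rfl _).trans key

end Hall

/-! ### Linearization in commutative rings -/

/-- The power sum `∑ m ^ (p - 1)` over the residues modulo `p` is `-1`. -/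
theorem sum_range_pow_pred {R : Type*} [CommRing R] {p : ℕ} (hp : p.Prime) (hpR : (p : R) = 0) :
    ∑ m ∈ Finset.range p, (m : R) ^ (p - 1) = -1 := by
  have : Fact p.Prime := ⟨hp⟩
  have : NeZero p := ⟨hp.ne_zero⟩
  obtain ⟨n, rfl⟩ : ∃ n, p = n + 1 := ⟨p - 1, (Nat.succ_pred hp.ne_zero).symm⟩
  have hn : n ≠ 0 := by rintro rfl; exact Nat.not_prime_one hp
  have h1 : ∀ m ∈ Finset.range n, ((m + 1 : ℕ) : R) ^ n = 1 := by
    intro m hm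
    have h2 : ((m + 1 : ℕ) : ZMod (n + 1)) ≠ 0 := by
      rw [Ne, ZMod.natCast_eq_zero_iff]
      intro h
      have := Nat.le_of_dvd (Nat.succ_pos m) h
      have := Finset.mem_range.1 hm
      omega
    have h3 := ZMod.pow_card_sub_one_eq_one h2
    rw [Nat.add_sub_cancel, ← Nat.cast_pow, ← Nat.cast_one (R := ZMod (n + 1)),
      ZMod.natCast_eq_natCast_iff] at h3
    obtain ⟨k, hk⟩ := h3.symm.dvd
    have h4 : (((m + 1 : ℕ) ^ n : ℕ) : R) - 1 = (((n + 1 : ℕ) : ℤ) * k : ℤ) := by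
      rw [← hk]; push_cast; ring
    rw [Int.cast_mul, Int.cast_natCast, hpR, zero_mul, sub_eq_zero, Nat.cast_pow] at h4
    exact h4
  rw [Nat.add_sub_cancel, Finset.sum_range_succ', Finset.sum_congr rfl h1]
  push_cast at hpR
  simp [hn]
  exact eq_neg_of_add_eq_zero_left hpR

/-- Linearization: over a commutative ring of characteristic `p`, if `1 + t + ⋯ + t ^ (p - 1)`
vanishes on a multiplicative monoid `T`, then so does every product of `p - 1` elements `t - 1`. -/
theorem ring_linearization {A : Type*} [CommRing A] {p : ℕ} (hp : p.Prime) (hpA : (p : A) = 0)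
    (T : Submonoid A) (hT : ∀ t ∈ T, ∑ m ∈ Finset.range p, t ^ m = 0) (t : Fin (p - 1) → A)
    (ht : ∀ i, t i ∈ T) : ∏ i, (t i - 1) = 0 := by
  classical
  have : Fact p.Prime := ⟨hp⟩
  rcases subsingleton_or_nontrivial A with hA | hA
  · exact Subsingleton.elim _ _
  have : CharP A p := (CharP.charP_iff_prime_eq_zero hp).2 hpA
  have hnil : ∀ i, t i - 1 ∈ nilradical A := by
    intro i
    refine ⟨p, ?_⟩
    have := mul_geom_sum (t i) p
    rw [hT _ (ht i), mul_zero] at this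
    rw [sub_pow_char, one_pow, ← this]
    exact Submodule.zero_mem _
  -- inclusion-exclusion over the sub-products of the `t i`
  have h1 : ∑ m ∈ Finset.range p, ∏ i, (t i ^ m - 1) = 0 := by
    simp_rw [Finset.prod_sub]
    rw [Finset.sum_comm]
    refine Finset.sum_eq_zero fun S _ => ?_
    simp only [Finset.prod_const_one, mul_one, Finset.prod_pow, ← Finset.mul_sum]
    rw [hT _ (T.prod_mem fun i _ => ht i), mul_zero]
  simp_rw [← mul_geom_sum, Finset.prod_mul_distrib, ← Finset.mul_sum] at h1
  -- modulo the nilradical the cofactor of `∏ (t i - 1)` is the power sum `-1`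
  have hu : IsUnit (∑ m ∈ Finset.range p, ∏ i, ∑ k ∈ Finset.range m, t i ^ k) := by
    have h2 : (∑ m ∈ Finset.range p, ∏ i, ∑ k ∈ Finset.range m, t i ^ k) - (-1) ∈
        nilradical A := by
      rw [← Ideal.Quotient.eq]
      have h3 : ∀ i, Ideal.Quotient.mk (nilradical A) (t i) = 1 := by
        intro i
        rw [← map_one (Ideal.Quotient.mk (nilradical A)), Ideal.Quotient.eq]
        exact hnil i
      have h4 : ((p : ℕ) : A ⧸ nilradical A) = 0 := by
        rw [← map_natCast (Ideal.Quotient.mk (nilradical A)), hpA, map_zero]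
      rw [map_neg, map_one, ← sum_range_pow_pred hp h4]
      simp [h3]
    have h5 := IsNilpotent.isUnit_add_left_of_commute h2 (isUnit_one.neg) (Commute.all _ _)
    rwa [add_sub_cancel] at h5
  exact (hu.mul_left_eq_zero).1 h1

/-- If a family of sets of vectors `Q 0 ⊆ {0}, Q 1, Q 2, …` is such that every element of `S` sends
`Q (j + 1)` into `Q j`, then the `j`-th power of the ideal spanned by `S` annihilates `Q j`. -/
theorem span_pow_smul_eq_zero {A V : Type*} [CommRing A] [AddCommGroup V] [Module A V] (S : Set A)
    (Q : ℕ → Set V) (h0 : ∀ v ∈ Q 0, v = 0) (hQ : ∀ j, ∀ s ∈ S, ∀ v ∈ Q (j + 1), s • v ∈ Q j)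
    (j : ℕ) : ∀ a ∈ Ideal.span S ^ j, ∀ v ∈ Q j, a • v = 0 := by
  induction j with
  | zero => intro a _ v hv; rw [h0 v hv, smul_zero]
  | succ j ih =>
    intro a ha v hv
    rw [pow_succ] at ha
    refine Submodule.mul_induction_on ha ?_ ?_
    · intro b hb s hs
      induction hs using Submodule.span_induction generalizing b with
      | mem s hs => rw [mul_smul]; exact ih b hb _ (hQ j s hs v hv)
      | zero => simp
      | add x y _ _ hx hy => rw [mul_add, add_smul, hx b hb, hy b hb, add_zero]
      | smul r x _ hx =>
        rw [smul_eq_mul, ← mul_assoc]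
        exact hx _ (Ideal.mul_mem_right _ _ hb)
    · intro x y hx hy
      rw [add_smul, hx, hy, add_zero]

/-! ### The action on an abelian normal subgroup -/

/-- The standing hypotheses in the form in which they are used. The set `G_{-φ}` appears as the set
of elements inverted by `φ`, and oddness of the order as the existence, for each element, of a
square root among its powers. The field `gen` says `G = [G, φ]`. -/
structure InvHyp (p c : ℕ) {G : Type*} [Group G] (φ : G ≃* G) : Prop where
  invol : ∀ g, φ (φ g) = g
  sqrt : ∀ x : G, ∃ k : ℕ, x ^ k * x ^ k = x
  fix : (fixedSubgroup φ).lowerCentralSeries c = ⊥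
  exp : ∀ x, φ x = x⁻¹ → x ^ p = 1
  gen : Subgroup.closure {x | φ x = x⁻¹} = ⊤

section Action
open scoped IsMulCommutative commutatorElement Pointwise
variable {G : Type*} [Group G] {φ : G ≃* G} {p c : ℕ}

theorem inv_pow_of_inv {x : G} (hx : φ x = x⁻¹) (k : ℕ) : φ (x ^ k) = (x ^ k)⁻¹ := by
  rw [map_pow, hx, inv_pow]

theorem mem_relCentralizer_of (Z Y : Subgroup G) [Y.Normal] (x : G)
    (h : ∀ z ∈ Z, ⁅x, z⁆ ∈ Y) : x ∈ relCentralizer Z Y := by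
  rw [relCentralizer, Subgroup.mem_comap, Subgroup.mem_centralizer_iff_commutator_eq_one]
  rintro _ ⟨z, hz, rfl⟩
  rw [← map_commutatorElement]
  have := Y.inv_mem (h z hz)
  rw [commutatorElement_inv] at this
  exact (QuotientGroup.eq_one_iff _).2 this

/-- If `φ` acts as `1` or as `-1` on `L` modulo `P`, then `G = [G, φ]` acts trivially. -/
theorem InvHyp.trivial_action (H : InvHyp p c φ) (L P : Subgroup G) [L.Normal] [P.Normal]
    (h : (∀ l ∈ L, φ l * l ∈ P) ∨ (∀ l ∈ L, φ l * l⁻¹ ∈ P)) : ⁅(⊤ : Subgroup G), L⁆ ≤ P := by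
  rw [← le_relCentralizer_iff, ← H.gen, Subgroup.closure_le]
  intro x hx
  apply mem_relCentralizer_of
  intro l hl
  obtain ⟨k, hk⟩ := H.sqrt x
  have hy := inv_pow_of_inv hx k
  generalize x ^ k = y at hk hy
  subst hk
  have hl' : y * l * y⁻¹ ∈ L := Subgroup.Normal.conj_mem ‹_› l hl y
  rcases h with h | h
  · have h1 := h l hl
    have h2 := h _ hl'
    have h3 : (φ l * l)⁻¹ * (y * (φ (y * l * y⁻¹) * (y * l * y⁻¹)) * y⁻¹) ∈ P :=
      P.mul_mem (P.inv_mem h1) (Subgroup.Normal.conj_mem ‹_› _ h2 y)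
    have h4 := Subgroup.Normal.conj_mem ‹P.Normal› _ h3 l
    convert h4 using 1
    simp [hy, commutatorElement_def, mul_assoc]
  · have h1 := h l hl
    have h2 := h _ hl'
    have h3 : (φ l * l⁻¹)⁻¹ * (y * (φ (y * l * y⁻¹) * (y * l * y⁻¹)⁻¹) * y⁻¹) ∈ P :=
      P.mul_mem (P.inv_mem h1) (Subgroup.Normal.conj_mem ‹_› _ h2 y)
    convert P.inv_mem h3 using 1
    simp [hy, commutatorElement_def, mul_assoc]

open Additive in
/-- The elements of `L` annihilated by the set `K` of scalars. -/
def annSub (L : Subgroup G) [IsMulCommutative L] {A : Type*} [CommRing A]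
    [Module A (Additive L)] (K : Set A) : Subgroup G where
  carrier := {x | ∃ h : x ∈ L, ∀ a ∈ K, a • ofMul (⟨x, h⟩ : L) = 0}
  one_mem' := ⟨L.one_mem, fun a _ => smul_zero a⟩
  mul_mem' := by
    rintro x y ⟨hx, hx'⟩ ⟨hy, hy'⟩
    refine ⟨L.mul_mem hx hy, fun a ha => ?_⟩
    have : ofMul (⟨x * y, L.mul_mem hx hy⟩ : L) = ofMul ⟨x, hx⟩ + ofMul ⟨y, hy⟩ := rfl
    rw [this, smul_add, hx' a ha, hy' a ha, add_zero]
  inv_mem' := by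
    rintro x ⟨hx, hx'⟩
    refine ⟨L.inv_mem hx, fun a ha => ?_⟩
    have : ofMul (⟨x⁻¹, L.inv_mem hx⟩ : L) = - ofMul ⟨x, hx⟩ := rfl
    rw [this, smul_neg, hx' a ha, neg_zero]

/-- The conjugation action of `G` on the additive group of an abelian normal subgroup `L`. -/
def conjEnd (L : Subgroup G) [L.Normal] [IsMulCommutative L] :
    G →* AddMonoid.End (Additive L) where
  toFun g := MonoidHom.toAdditive (MulAut.conjNormal g).toMonoidHom
  map_one' := by rw [map_one]; rfl
  map_mul' a b := by rw [map_mul]; rfl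

theorem conjEnd_coe (L : Subgroup G) [L.Normal] [IsMulCommutative L] (g : G) (v : Additive L) :
    ((conjEnd L g v).toMul : G) = g * v.toMul * g⁻¹ := rfl

/-- A commutative ring `A` acting on the abelian normal subgroup `L` by endomorphisms that commute
with the conjugation action of `G`, together with a homomorphism `τ` from `Z` to `A` that
realizes the conjugation action of `Z`. -/
structure ActionRing (L Z : Subgroup G) [L.Normal] [IsMulCommutative L] (A : Type*) [CommRing A]
    [Module A (Additive L)] where
  τ : Z →* A
  τ_smul : ∀ z v, τ z • v = conjEnd L (z : G) v
  smul_comm : ∀ (a : A) (g : G) (v : Additive L), a • conjEnd L g v = conjEnd L g (a • v)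

variable {L Z : Subgroup G} [L.Normal] [IsMulCommutative L] {A : Type*} [CommRing A]
    [Module A (Additive L)] (R : ActionRing L Z A)

theorem ActionRing.annSub_normal (R : ActionRing L Z A) (K : Set A) : (annSub L K).Normal := by
  refine ⟨?_⟩
  rintro x ⟨hx, hx'⟩ g
  refine ⟨Subgroup.Normal.conj_mem ‹_› x hx g, fun a ha => ?_⟩
  have := R.smul_comm a g (Additive.ofMul ⟨x, hx⟩)
  rw [hx' a ha, map_zero] at this
  exact this

theorem ActionRing.sub_one_smul (z : Z) (v : Additive L) :
    (((R.τ z - 1) • v).toMul : G) = ⁅(z : G), (v.toMul : G)⁆ := by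
  rw [sub_smul, one_smul, R.τ_smul, sub_eq_add_neg, commutatorElement_def, ← conjEnd_coe]
  rfl

/-- If the scalars in the ideal `K` annihilate all elements of `L` fixed by `φ`, or all elements
inverted by `φ`, then the products of `K` with operators `τ z - 1` annihilate `L`. -/
theorem ActionRing.mul_span_le (H : InvHyp p c φ) (hL : ∀ x ∈ L, φ x ∈ L) (K : Ideal A) (S : Set A)
    (hS : ∀ s ∈ S, ∃ z, s = R.τ z - 1)
    (h : (∀ x ∈ L, φ x = x → x ∈ annSub L (K : Set A)) ∨
      (∀ x ∈ L, φ x = x⁻¹ → x ∈ annSub L (K : Set A))) :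
    K * Ideal.span S ≤ Module.annihilator A (Additive L) := by
  have := R.annSub_normal (K : Set A)
  have key : ⁅(⊤ : Subgroup G), L⁆ ≤ annSub L (K : Set A) := by
    apply H.trivial_action
    rcases h with h | h
    · left
      intro l hl
      apply h _ (L.mul_mem (hL l hl) hl)
      rw [map_mul, H.invol]
      exact setLike_mul_comm hl (hL l hl)
    · right
      intro l hl
      apply h _ (L.mul_mem (hL l hl) (L.inv_mem hl))
      rw [map_mul, H.invol, map_inv, mul_inv_rev, inv_inv]
  rw [Submodule.mul_le]
  intro a ha s hs
  induction hs using Submodule.span_induction generalizing a with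
  | mem s hs =>
    obtain ⟨z, rfl⟩ := hS s hs
    rw [Module.mem_annihilator]
    intro v
    obtain ⟨h1, h2⟩ := key (Subgroup.commutator_mem_commutator (Subgroup.mem_top (z : G))
      v.toMul.2)
    have h3 := h2 a ha
    rw [mul_smul]
    convert h3 using 2
    exact Subtype.ext (R.sub_one_smul z v)
  | zero => simp
  | add x y _ _ hx hy => rw [mul_add]; exact Submodule.add_mem _ (hx a ha) (hy a ha)
  | smul r x _ hx =>
    rw [smul_eq_mul, ← mul_assoc]
    exact hx _ (Ideal.mul_mem_right _ _ ha)

/-- The ideal generated by the operators `z - 1` with `z ∈ Z` fixed by `φ`. -/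
def ActionRing.Jpos (φ : G ≃* G) : Ideal A := Ideal.span {a | ∃ z : Z, φ z = z ∧ a = R.τ z - 1}

/-- The ideal generated by the operators `z - 1` with `z ∈ Z` inverted by `φ`. -/
def ActionRing.Jneg (φ : G ≃* G) : Ideal A :=
  Ideal.span {a | ∃ z : Z, φ z = (z : G)⁻¹ ∧ a = R.τ z - 1}

/-- The nilpotency of the fixed-point subgroup bounds the unipotency of the fixed part of `Z`. -/
theorem ActionRing.Jpos_pow (H : InvHyp p c φ) (hL : ∀ x ∈ L, φ x ∈ L) :
    R.Jpos φ ^ (c + 1) ≤ Module.annihilator A (Additive L) := by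
  rw [pow_succ]
  refine R.mul_span_le H hL _ _ (fun s ⟨z, _, hz⟩ => ⟨z, hz⟩) (Or.inl ?_)
  intro x hx hfx
  refine ⟨hx, fun a ha => ?_⟩
  refine span_pow_smul_eq_zero _
    (fun j => {v : Additive L | (v.toMul : G) ∈ (fixedSubgroup φ).lowerCentralSeries (c - j)})
    ?_ ?_ c a ha _ ?_
  · intro v hv
    simp only [Nat.sub_zero, Set.mem_ofPred_eq, H.fix, Subgroup.mem_bot] at hv
    exact Subtype.ext hv
  · rintro j _ ⟨z, hz, rfl⟩ v hv
    simp only [Set.mem_ofPred_eq] at hv ⊢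
    rw [R.sub_one_smul]
    refine (fixedSubgroup φ).lowerCentralSeries_antitone (show c - j ≤ c - (j + 1) + 1 by omega) ?_
    rw [Subgroup.lowerCentralSeries_succ, Subgroup.commutator_comm]
    exact Subgroup.commutator_mem_commutator hz hv
  · simp only [Nat.sub_self, Set.mem_ofPred_eq]
    exact hfx

theorem ActionRing.mul_pow_eq (z : Z) (v : Additive L) (j : ℕ) :
    ((v.toMul : G) * z) ^ j =
      (((∑ m ∈ Finset.range j, R.τ z ^ m) • v).toMul : G) * (z : G) ^ j := by
  induction j with
  | zero => simp
  | succ j ih =>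
    rw [pow_succ', ih, geom_sum_succ, add_comm (_ * _) (1 : A), add_smul, one_smul, mul_smul,
      R.τ_smul, toMul_add, Subgroup.coe_mul, conjEnd_coe]
    group

/-- For `z ∈ Z` inverted by `φ`, the operator `1 + z + ⋯ + z ^ (p - 1)` annihilates the elements of
`L` inverted by `φ`: with `y ^ 2 = z`, the element `y * l * y` is inverted by `φ`, so its `p`-th
power is trivial. -/
theorem ActionRing.norm_smul (H : InvHyp p c φ) (z : Z) (hz : φ z = (z : G)⁻¹) (v : Additive L)
    (hv : φ v.toMul = (v.toMul : G)⁻¹) : (∑ m ∈ Finset.range p, R.τ z ^ m) • v = 0 := by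
  obtain ⟨k, hk⟩ := H.sqrt z
  have hy := inv_pow_of_inv hz k
  obtain ⟨y, hyk⟩ : ∃ y : Z, y = z ^ k := ⟨_, rfl⟩
  have hyk' : (y : G) = (z : G) ^ k := by rw [hyk]; rfl
  rw [← hyk'] at hk hy
  have h1 := R.mul_pow_eq z (conjEnd L (y : G) v) p
  have h2 : ((conjEnd L (y : G) v).toMul : G) * z = y * v.toMul * y := by
    rw [conjEnd_coe]; rw [← hk]; group
  rw [h2, H.exp _ hz, H.exp _ (by simp only [map_mul, hy, hv]; group), mul_one] at h1
  have h3 : (∑ m ∈ Finset.range p, R.τ z ^ m) • conjEnd L (y : G) v = 0 := Subtype.ext h1.symm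
  rw [R.smul_comm] at h3
  have h4 : conjEnd L (y : G)⁻¹
      (conjEnd L (y : G) ((∑ m ∈ Finset.range p, R.τ z ^ m) • v)) = 0 := by
    rw [h3, map_zero]
  change (conjEnd L (y : G)⁻¹ * conjEnd L (y : G)) _ = 0 at h4
  rw [← map_mul, inv_mul_cancel, map_one] at h4
  exact h4

/-- The exponent condition bounds the unipotency of the part of `Z` inverted by `φ`: on the elements
of `L` inverted by `φ`, products of `p - 1` operators `z - 1` vanish by linearization of
`1 + z + ⋯ + z ^ (p - 1) = 0`, and one further factor suffices on all of `L`. -/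
theorem ActionRing.Jneg_pow (hp : p.Prime) (H : InvHyp p c φ) (hL : ∀ x ∈ L, φ x ∈ L) :
    R.Jneg φ ^ p ≤ Module.annihilator A (Additive L) := by
  obtain ⟨n, hn⟩ : ∃ n, p = n + 1 := ⟨p - 1, (Nat.succ_pred hp.ne_zero).symm⟩
  have hn' : n = p - 1 := by omega
  rw [hn, pow_succ]
  refine R.mul_span_le H hL _ _ (fun s ⟨z, _, hz⟩ => ⟨z, hz⟩) (Or.inr ?_)
  let B : Set (Additive L) := {v | φ v.toMul = (v.toMul : G)⁻¹}
  let N : Ideal A := (Submodule.span A B).annihilator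
  have hN : ∀ a, a ∈ N ↔ ∀ v : B, a • (v : Additive L) = 0 := fun a =>
    Submodule.mem_annihilator_span _ _
  -- the scalars by which the part of `Z` inverted by `φ` acts form a monoid
  let T : Submonoid (A ⧸ N) :=
    { carrier := {t | ∃ z : Z, φ z = (z : G)⁻¹ ∧ t = Ideal.Quotient.mk N (R.τ z)}
      one_mem' := ⟨1, by simp, by simp⟩
      mul_mem' := by
        rintro _ _ ⟨z, hz, rfl⟩ ⟨w, hw, rfl⟩
        obtain ⟨k, hk⟩ := H.sqrt z
        have hy := inv_pow_of_inv hz k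
        have hk' : z ^ k * z ^ k = z := Subtype.ext hk
        refine ⟨z ^ k * w * z ^ k, ?_, ?_⟩
        · simp only [Subgroup.coe_mul, Subgroup.coe_pow, map_mul, hy, hw]; group
        · rw [← map_mul]
          congr 1
          nth_rw 1 [← hk']
          simp only [map_mul]
          ring }
  have hpN : ((p : ℕ) : A ⧸ N) = 0 := by
    rw [← map_natCast (Ideal.Quotient.mk N), Ideal.Quotient.eq_zero_iff_mem, hN]
    rintro ⟨v, hv⟩
    rw [Nat.cast_smul_eq_nsmul]
    exact Subtype.ext (H.exp _ hv)
  have hT : ∀ t ∈ T, ∑ m ∈ Finset.range p, t ^ m = 0 := by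
    rintro _ ⟨z, hz, rfl⟩
    simp_rw [← map_pow (Ideal.Quotient.mk N)]
    rw [← map_sum, Ideal.Quotient.eq_zero_iff_mem, hN]
    rintro ⟨v, hv⟩
    exact R.norm_smul H z hz v hv
  have hJ : R.Jneg φ ^ n ≤ N := by
    have : R.Jneg φ ^ n = Submodule.span A ({a | ∃ z : Z, φ z = (z : G)⁻¹ ∧ a = R.τ z - 1} ^ n) :=
      Submodule.span_pow _ _
    rw [this, Submodule.span_le]
    intro a ha
    obtain ⟨f, rfl⟩ := Set.mem_pow.1 ha
    subst hn'
    choose z hz hf using fun i => (f i).2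
    have h1 := ring_linearization hp hpN T hT (fun i => Ideal.Quotient.mk N (R.τ (z i)))
      fun i => ⟨z i, hz i, rfl⟩
    rw [SetLike.mem_coe, ← Ideal.Quotient.eq_zero_iff_mem, List.prod_ofFn, map_prod, ← h1]
    refine Finset.prod_congr rfl fun i _ => ?_
    rw [hf, map_sub, map_one]
  intro x hx hfx
  exact ⟨hx, fun a ha => (hN a).1 (hJ ha) ⟨Additive.ofMul ⟨x, hx⟩, hfx⟩⟩

/-- Every operator `z - 1` with `z ∈ Z` lies in the sum of the two ideals `Jpos` and `Jneg`, and the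
power `c + 1 + p` of this sum annihilates `L`. -/
theorem ActionRing.itComm_eq_bot (R : ActionRing L Z A) (hp : p.Prime) (H : InvHyp p c φ)
    (hL : ∀ x ∈ L, φ x ∈ L) (hZ : ∀ x ∈ Z, φ x ∈ Z) : itComm L Z (c + 1 + p) = ⊥ := by
  obtain ⟨J, hJdef⟩ : ∃ J, J = R.Jpos φ ⊔ R.Jneg φ := ⟨_, rfl⟩
  have hJ : J ^ (c + 1 + p) ≤ Module.annihilator A (Additive L) := hJdef ▸
    Ideal.sup_pow_add_le_pow_sup_pow.trans (sup_le (R.Jpos_pow H hL) (R.Jneg_pow hp H hL))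
  have hmem : ∀ z : Z, R.τ z - 1 ∈ J := by
    intro z
    -- write `z = y * h` with `y` inverted and `h` fixed by `φ`
    obtain ⟨w, hw⟩ : ∃ w : Z, (w : G) = z * (φ z)⁻¹ :=
      ⟨⟨z * (φ z)⁻¹, Z.mul_mem z.2 (Z.inv_mem (hZ _ z.2))⟩, rfl⟩
    have hw' : φ w = (w : G)⁻¹ := by rw [hw]; simp [H.invol]
    obtain ⟨k, hk⟩ := H.sqrt w
    have hy := inv_pow_of_inv hw' k
    have h1 : R.τ z - 1 = R.τ (w ^ k) * (R.τ ((w ^ k)⁻¹ * z) - 1) + (R.τ (w ^ k) - 1) := by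
      rw [mul_sub, ← map_mul, mul_inv_cancel_left]; ring
    rw [h1, hJdef]
    refine Ideal.add_mem _ (Ideal.mul_mem_left _ _ ?_) ?_
    · refine Ideal.mem_sup_left (Ideal.subset_span ⟨_, ?_, rfl⟩)
      have h2 : φ z = (w : G)⁻¹ * z := by rw [hw]; group
      simp only [Subgroup.coe_mul, Subgroup.coe_pow, Subgroup.coe_inv, map_mul, map_inv, hy, h2]
      nth_rw 2 [← hk]
      group
    · exact Ideal.mem_sup_right (Ideal.subset_span ⟨_, hy, rfl⟩)
  have key : ∀ j ≤ c + 1 + p,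
      itComm L Z j ≤ annSub L ((J ^ (c + 1 + p - j) : Ideal A) : Set A) := by
    intro j
    induction j with
    | zero =>
      intro _ x hx
      exact ⟨hx, fun a ha => Module.mem_annihilator.1 (hJ ha) _⟩
    | succ j ih =>
      intro hj
      refine (Subgroup.commutator_mono (ih (by omega)) le_rfl).trans ?_
      rw [Subgroup.commutator_comm, Subgroup.commutator_le]
      rintro z hz x ⟨hx, hx'⟩
      have h1 := R.sub_one_smul ⟨z, hz⟩ (Additive.ofMul ⟨x, hx⟩)
      have h2 : ⁅z, x⁆ ∈ L := by
        have h := Subtype.property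
          (Additive.toMul ((R.τ ⟨z, hz⟩ - 1) • Additive.ofMul (⟨x, hx⟩ : L)))
        rw [h1] at h
        exact h
      refine ⟨h2, fun a ha => ?_⟩
      have h3 : Additive.ofMul (⟨⁅z, x⁆, h2⟩ : L) =
          (R.τ ⟨z, hz⟩ - 1) • Additive.ofMul (⟨x, hx⟩ : L) := Subtype.ext h1.symm
      rw [h3, ← mul_smul]
      apply hx'
      rw [show c + 1 + p - j = c + 1 + p - (j + 1) + 1 by omega, pow_succ]
      exact Ideal.mul_mem_mul ha (hmem _)
  rw [eq_bot_iff]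
  intro x hx
  obtain ⟨h1, h2⟩ := key _ le_rfl hx
  have h3 := h2 1 (by simp)
  rw [one_smul] at h3
  exact congrArg (fun v : Additive L => (v.toMul : G)) h3

end Action

/-! ### Quotients and sections that need not be abelian -/

section Main
open scoped IsMulCommutative commutatorElement
variable {G : Type*} [Group G] {φ : G ≃* G} {p c : ℕ}

/-- Since `[Z, G] ≤ L` and `L` is abelian, the action of `Z` on `L` commutes with that of `G`. -/
theorem conjEnd_comm {L Z : Subgroup G} [L.Normal] [IsMulCommutative L]
    (hZL : ⁅Z, (⊤ : Subgroup G)⁆ ≤ L) (z : Z) (g : G) :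
    conjEnd L (z : G) * conjEnd L g = conjEnd L g * conjEnd L (z : G) := by
  have h1 : ⁅(z : G), g⁆ ∈ L :=
    hZL (Subgroup.commutator_mem_commutator z.2 (Subgroup.mem_top g))
  have h2 : conjEnd L ⁅(z : G), g⁆ = 1 := by
    ext v
    change ⁅(z : G), g⁆ * (v.toMul : G) * ⁅(z : G), g⁆⁻¹ = v.toMul
    rw [setLike_mul_comm h1 v.toMul.2, mul_inv_cancel_right]
  have h3 : (z : G) * g = ⁅(z : G), g⁆ * (g * z) := by rw [commutatorElement_def]; group
  rw [← map_mul, h3, map_mul, h2, one_mul, map_mul]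

/-- Let `L` be an abelian normal subgroup and `Z / L` central in `G / L`, both invariant under `φ`.
Then `Z` acts on `L` by commuting operators, nilpotently with a bound depending on `p` and `c`. -/
theorem InvHyp.itComm_eq_bot (hp : p.Prime) (H : InvHyp p c φ) (L Z : Subgroup G) [L.Normal]
    [IsMulCommutative L] (hL : ∀ x ∈ L, φ x ∈ L) (hZ : ∀ x ∈ Z, φ x ∈ Z)
    (hZL : ⁅Z, (⊤ : Subgroup G)⁆ ≤ L) : itComm L Z (c + 1 + p) = ⊥ := by
  let s : Set (AddMonoid.End (Additive L)) := Set.range fun z : Z => conjEnd L (z : G)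
  have hs : ∀ x ∈ s, ∀ y ∈ s, x * y = y * x := by
    rintro _ ⟨z, rfl⟩ _ ⟨w, rfl⟩
    exact conjEnd_comm hZL z w
  have := Subring.isMulCommutative_closure hs
  let _ : CommRing (Subring.closure s) := inferInstance
  let R : ActionRing L Z (Subring.closure s) :=
    { τ :=
        { toFun := fun z => ⟨conjEnd L (z : G), Subring.subset_closure ⟨z, rfl⟩⟩
          map_one' := Subtype.ext (map_one (conjEnd L))
          map_mul' := fun a b => Subtype.ext (map_mul (conjEnd L) (a : G) (b : G)) }
      τ_smul := fun z v => rfl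
      smul_comm := by
        rintro ⟨a, ha⟩ g v
        have h1 : Subring.closure s ≤ Subring.centralizer {conjEnd L g} := by
          rw [Subring.closure_le]
          rintro _ ⟨z, rfl⟩
          rw [SetLike.mem_coe, Subring.mem_centralizer_iff]
          rintro _ rfl
          exact (conjEnd_comm hZL z g).symm
        have h2 := Subring.mem_centralizer_iff.1 (h1 ha) _ rfl
        exact (DFunLike.congr_fun h2 v).symm }
  exact R.itComm_eq_bot hp H hL hZ

theorem map_eq_of_le {N : Subgroup G} (hφ : ∀ g, φ (φ g) = g)
    (hN : ∀ x ∈ N, φ x ∈ N) : N.map (φ : G →* G) = N := by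
  apply le_antisymm
  · rintro _ ⟨x, hx, rfl⟩
    exact hN x hx
  · intro x hx
    exact ⟨φ x, hN x hx, hφ x⟩

/-- The hypotheses pass to quotients by normal subgroups invariant under `φ`. -/
theorem InvHyp.quotient (H : InvHyp p c φ) (N : Subgroup G) [N.Normal]
    (hN : N.map (φ : G →* G) = N) : InvHyp p c (QuotientGroup.congr N N φ hN) := by
  have hmk : ∀ g : G, QuotientGroup.congr N N φ hN (g : G ⧸ N) = ((φ g : G) : G ⧸ N) :=
    fun g => rfl
  refine ⟨?_, ?_, ?_, ?_, ?_⟩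
  · intro g
    induction g using QuotientGroup.induction_on with | H g =>
    rw [hmk, hmk, H.invol]
  · intro g
    induction g using QuotientGroup.induction_on with | H g =>
    obtain ⟨k, hk⟩ := H.sqrt g
    exact ⟨k, congrArg (QuotientGroup.mk' N) hk⟩
  · have h1 : fixedSubgroup (QuotientGroup.congr N N φ hN) ≤
        (fixedSubgroup φ).map (QuotientGroup.mk' N) := by
      intro g
      induction g using QuotientGroup.induction_on with | H g =>
      intro hg
      have hg : ((φ g : G) : G ⧸ N) = g := hg
      -- `g⁻¹ * φ g ∈ N` is inverted by `φ`; multiplying `g` by its square root gives a fixed point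
      have h2 : g⁻¹ * φ g ∈ N := QuotientGroup.eq.1 hg.symm
      obtain ⟨k, hk⟩ := H.sqrt (g⁻¹ * φ g)
      have h3 : φ (g⁻¹ * φ g) = (g⁻¹ * φ g)⁻¹ := by simp [H.invol]
      have h4 := inv_pow_of_inv h3 k
      have h5 : (g⁻¹ * φ g) ^ k ∈ N := N.pow_mem h2 k
      generalize (g⁻¹ * φ g) ^ k = y at hk h4 h5
      refine ⟨g * y, ?_, ?_⟩
      · change φ (g * y) = g * y
        have h6 : φ g = g * (y * y) := by rw [hk]; group
        rw [map_mul, h4, h6]; group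
      · exact (QuotientGroup.eq.2 (by simpa using h5) : ((g : G) : G ⧸ N) = (g * y : G)).symm
    rw [eq_bot_iff]
    refine (Subgroup.lowerCentralSeries_mono c h1).trans ?_
    change ((fixedSubgroup φ).map (QuotientGroup.mk' N)).lowerCentralSeries c ≤ ⊥
    rw [← Subgroup.map_lowerCentralSeries, H.fix, Subgroup.map_bot]
  · intro x hx
    obtain ⟨k, hk⟩ : ∃ k : ℕ, x ^ k * x ^ k = x := by
      induction x using QuotientGroup.induction_on with | H g =>
      obtain ⟨k, hk⟩ := H.sqrt g
      exact ⟨k, congrArg (QuotientGroup.mk' N) hk⟩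
    have h1 := inv_pow_of_inv hx k
    generalize x ^ k = y at hk h1
    subst hk
    induction y using QuotientGroup.induction_on with | H g =>
    have h2 := H.exp (g * (φ g)⁻¹) (by simp [H.invol])
    have h3 := congrArg (QuotientGroup.mk' N) h2
    rw [map_pow, map_mul, map_inv, map_one] at h3
    change ((g : G ⧸ N) * (QuotientGroup.congr N N φ hN g)⁻¹) ^ p = 1 at h3
    rwa [h1, inv_inv] at h3
  · rw [eq_top_iff, ← Subgroup.map_top_of_surjective _ (QuotientGroup.mk'_surjective N), ← H.gen,
      MonoidHom.map_closure, Subgroup.closure_le]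
    rintro _ ⟨x, hx, rfl⟩
    apply Subgroup.subset_closure
    have hx : φ x = x⁻¹ := hx
    change ((φ x : G) : G ⧸ N) = _
    rw [hx]; rfl

/-- The nilpotent action of `Z` on `L / [L, L]`, for `L` not necessarily abelian. -/
theorem InvHyp.itComm_le (hp : p.Prime) (H : InvHyp p c φ) (L Z : Subgroup G) [L.Normal]
    (hL : ∀ x ∈ L, φ x ∈ L) (hZ : ∀ x ∈ Z, φ x ∈ Z)
    (hZL : ⁅Z, (⊤ : Subgroup G)⁆ ≤ L) : itComm L Z (c + 1 + p) ≤ ⁅L, L⁆ := by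
  have hN : (⁅L, L⁆).map (φ : G →* G) = ⁅L, L⁆ := by
    rw [Subgroup.map_commutator, map_eq_of_le H.invol hL]
  let π := QuotientGroup.mk' ⁅L, L⁆
  have hπ : Function.Surjective π := QuotientGroup.mk'_surjective _
  have : (L.map π).Normal := Subgroup.Normal.map ‹_› π hπ
  have : IsMulCommutative (L.map π) := by
    rw [← Subgroup.commutator_self_eq_bot_iff, ← Subgroup.map_commutator, Subgroup.map_eq_bot_iff,
      QuotientGroup.ker_mk']
  have h1 := (H.quotient _ hN).itComm_eq_bot hp (L.map π) (Z.map π)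
    (by rintro _ ⟨x, hx, rfl⟩; exact ⟨φ x, hL x hx, rfl⟩)
    (by rintro _ ⟨x, hx, rfl⟩; exact ⟨φ x, hZ x hx, rfl⟩)
    (by
      rw [← Subgroup.map_top_of_surjective π hπ, ← Subgroup.map_commutator]
      exact Subgroup.map_mono hZL)
  rwa [← map_itComm, Subgroup.map_eq_bot_iff, QuotientGroup.ker_mk'] at h1

/-! ### Induction on the derived length -/

/-- Iteration of `hallBound` along a central series of length `k`. -/
def centralBound (e : ℕ) : ℕ → ℕ → ℕ
  | 0, s => s
  | k + 1, s => centralBound e k (hallBound e s)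

/-- Climbing a central series of `G / M`: if `G / M` has class at most `k`, then the class of `G` is
bounded in terms of `k` and the class of `M`. -/
theorem InvHyp.lowerCentralSeries_le (hp : p.Prime) (H : InvHyp p c φ) (k : ℕ) :
    ∀ (s : ℕ) (M : Subgroup G) [M.Normal], (∀ x ∈ M, φ x ∈ M) →
      (⊤ : Subgroup G).lowerCentralSeries k ≤ M →
      (⊤ : Subgroup G).lowerCentralSeries (centralBound (c + 1 + p) k s) ≤
        M.lowerCentralSeries s := by
  induction k with
  | zero =>
    intro s M _ _ hk
    exact Subgroup.lowerCentralSeries_mono s hk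
  | succ k ih =>
    intro s M _ hM hk
    have hn := lowerCentralSeries_normal' (⊤ : Subgroup G) k
    let Z : Subgroup G := (⊤ : Subgroup G).lowerCentralSeries k ⊔ M
    have hZ : ∀ x ∈ Z, φ x ∈ Z := by
      have h1 : Z.map (φ : G →* G) ≤ Z := by
        rw [Subgroup.map_sup, Subgroup.map_lowerCentralSeries, map_eq_of_le H.invol hM,
          Subgroup.map_top_of_surjective _ φ.surjective]
      exact fun x hx => h1 (Subgroup.mem_map_of_mem _ hx)
    have hZM : ⁅Z, (⊤ : Subgroup G)⁆ ≤ M := by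
      rw [← le_relCentralizer_iff, sup_le_iff, le_relCentralizer_iff, le_relCentralizer_iff]
      exact ⟨hk, Subgroup.commutator_le_left _ _⟩
    exact (ih _ Z hZ le_sup_left).trans (hall_criterion M Z _ s
      ((Subgroup.commutator_mono le_rfl le_top).trans hZM) (H.itComm_le hp M Z hM hZ hZM))

/-- The bound on the nilpotency class, by recursion on the derived length. -/
def classBound (e : ℕ) : ℕ → ℕ
  | 0 => 0
  | d + 1 => centralBound e (classBound e d) 1

theorem InvHyp.lowerCentralSeries_le_derivedSeries (hp : p.Prime) (H : InvHyp p c φ) (d : ℕ) :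
    (⊤ : Subgroup G).lowerCentralSeries (classBound (c + 1 + p) d) ≤ derivedSeries G d := by
  induction d with
  | zero => exact le_top
  | succ d ih =>
    refine H.lowerCentralSeries_le hp _ 1 _ (fun x hx => ?_) ih
    exact map_derivedSeries_le_derivedSeries (φ : G →* G) d (Subgroup.mem_map_of_mem _ hx)

end Main

/-! ### Reduction to `G = [G, φ]` -/

/-- In a `p`-group with `p` odd every element has a square root among its powers. -/
theorem exists_sqrt {G : Type*} [Group G] {p : ℕ} (ho : Odd p) (hG : IsPGroup p G)
    (x : G) : ∃ k : ℕ, x ^ k * x ^ k = x := by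
  obtain ⟨n, hn⟩ := hG x
  obtain ⟨m, hm⟩ := ho.pow (n := n)
  refine ⟨m + 1, ?_⟩
  rw [← pow_add, show m + 1 + (m + 1) = p ^ n + 1 by omega, pow_succ, hn, one_mul]

/-- The automorphism induced on an invariant subgroup by an involutory automorphism. -/
def restrictAut {G : Type*} [Group G] (φ : G ≃* G) (hφ : ∀ g, φ (φ g) = g) (K : Subgroup G)
    (hK : ∀ x ∈ K, φ x ∈ K) : K ≃* K where
  toFun x := ⟨φ x, hK x x.2⟩
  invFun x := ⟨φ x, hK x x.2⟩
  left_inv x := Subtype.ext (hφ x)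
  right_inv x := Subtype.ext (hφ x)
  map_mul' x y := Subtype.ext (map_mul φ (x : G) y)

theorem nilpotency_class_bounded_pgroup :
    ∃ f : ℕ → ℕ → ℕ → ℕ, ∀ (p c d : ℕ), p.Prime → Odd p →
      ∀ (G : Type) [Group G] [Finite G] (φ : G ≃* G),
      (∀ g, φ (φ g) = g) → IsPGroup p G →
      upperCentralSeries ↥(fixedSubgroup φ) c = ⊤ →
      (∀ x ∈ negSet φ, x ^ p = 1) →
      derivedSeries G d = ⊥ →
      upperCentralSeries ↥(Subgroup.closure (negSet φ)) (f c d p) = ⊤ := by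
  refine ⟨fun c d p => classBound (c + 1 + p) d, ?_⟩
  intro p c d hp ho G _ _ φ hφ hG hfix hexp hd
  have hneg : ∀ x, x ∈ negSet φ ↔ φ x = x⁻¹ := by
    intro x
    constructor
    · rintro ⟨g, rfl⟩
      simp [hφ]
    · intro hx
      obtain ⟨k, hk⟩ := exists_sqrt ho hG x
      refine ⟨(x ^ k)⁻¹, ?_⟩
      rw [map_inv, inv_pow_of_inv hx k, inv_inv, hk]
  obtain ⟨K, hKdef⟩ : ∃ K, K = Subgroup.closure (negSet φ) := ⟨_, rfl⟩
  have hK : ∀ x ∈ K, φ x ∈ K := by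
    have h1 : K.map (φ : G →* G) ≤ K := by
      rw [hKdef, MonoidHom.map_closure, Subgroup.closure_le]
      rintro _ ⟨x, hx, rfl⟩
      apply Subgroup.subset_closure
      have := (hneg x).1 hx
      rw [hneg, MonoidHom.coe_coe, this, map_inv, this]
    exact fun x hx => h1 (Subgroup.mem_map_of_mem _ hx)
  have H : InvHyp p c (restrictAut φ hφ K hK) := by
    refine ⟨fun g => Subtype.ext (hφ g), exists_sqrt ho (hG.to_subgroup K), ?_, ?_, ?_⟩
    · have h1 : (fixedSubgroup φ).lowerCentralSeries c = ⊥ := by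
        have hfix' := Subgroup.lowerCentralSeries_eq_bot_iff_upperCentralSeries_eq_top.2 hfix
        rw [← Subgroup.top_subtype_lowerCentralSeries, hfix', Subgroup.map_bot]
      rw [← Subgroup.map_eq_bot_iff_of_injective _ K.subtype_injective,
        Subgroup.map_lowerCentralSeries, eq_bot_iff, ← h1]
      apply Subgroup.lowerCentralSeries_mono
      rintro _ ⟨x, hx, rfl⟩
      exact congrArg Subtype.val (show restrictAut φ hφ K hK x = x from hx)
    · intro x hx
      exact Subtype.ext (hexp x ((hneg x).2 (congrArg Subtype.val hx)))
    · rw [eq_top_iff]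
      rintro ⟨x, hx⟩ -
      subst hKdef
      induction hx using Subgroup.closure_induction with
      | mem x hx => exact Subgroup.subset_closure (Subtype.ext ((hneg x).1 hx))
      | one => exact Subgroup.one_mem _
      | mul x y hx hy h1 h2 => exact Subgroup.mul_mem _ h1 h2
      | inv x hx h1 => exact Subgroup.inv_mem _ h1
  have hdK : derivedSeries K d = ⊥ := by
    rw [← Subgroup.map_eq_bot_iff_of_injective _ K.subtype_injective, eq_bot_iff, ← hd]
    exact map_derivedSeries_le_derivedSeries K.subtype d
  rw [← hKdef]
  refine Subgroup.lowerCentralSeries_eq_bot_iff_upperCentralSeries_eq_top.1 ?_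
  rw [eq_bot_iff, ← hdK]
  exact H.lowerCentralSeries_le_derivedSeries hp d
end

section
/- Let p be an odd prime and c, d nonnegative integers. There exists a function f(c,d,p) such that the following holds: if G is a finite p-group admitting an involutory automorphism φ such that the fixed-point subgroup G_φ is nilpotent of class at most c, x^p = 1 for every x ∈ G_{-φ}, and the derived length of G is at most d, then the exponent of [G, φ] is at most f(c,d,p). -/
lemma mul_comm_of_mem_derivedSeries {G : Type*} [Group G] {d : ℕ}
    (hd : derivedSeries G (d + 1) = ⊥) {a b : G} (ha : a ∈ derivedSeries G d)
    (hb : b ∈ derivedSeries G d) : a * b = b * a := by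
  have h := Subgroup.commutator_mem_commutator ha hb
  rw [← derivedSeries_succ, hd, Subgroup.mem_bot] at h
  exact commutatorElement_eq_one_iff_mul_comm.mp h

lemma derivedSeries_quotient_eq_bot {G : Type*} [Group G] (d : ℕ) {N : Subgroup G} [N.Normal]
    (h : derivedSeries G d ≤ N) : derivedSeries (G ⧸ N) d = ⊥ := by
  rw [← map_derivedSeries_eq (QuotientGroup.mk'_surjective N), eq_bot_iff,
    Subgroup.map_le_iff_le_comap]
  rintro x hx
  simpa [Subgroup.mem_comap] using h hx

/-- The order of an `r`-generated finite group of exponent dividing `n` and derived length at most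
`d` is bounded in terms of `d`, `n`, `r`. In the induction, the term of the derived series before `⊥` has
bounded rank by Schreier's lemma. -/
lemma exists_card_bound (n : ℕ) (hn : 0 < n) (r d : ℕ) :
    ∃ B : ℕ, ∀ (G : Type) [Group G] [Finite G], derivedSeries G d = ⊥ → (∀ g : G, g ^ n = 1) →
      Group.rank G ≤ r → Nat.card G ≤ B := by
  induction d with
  | zero =>
    refine ⟨1, fun G _ _ hd _ _ => ?_⟩
    rw [← Subgroup.card_top, ← derivedSeries_zero, hd, Subgroup.card_bot]
  | succ d ih =>
    obtain ⟨B, hB⟩ := ih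
    refine ⟨n ^ (B * r) * B, fun G _ _ hd hG hr => ?_⟩
    set N := derivedSeries G d with hN
    have : N.Normal := derivedSeries_normal G d
    have hidx : N.index ≤ B := by
      rw [Subgroup.index]
      refine hB (G ⧸ N) (derivedSeries_quotient_eq_bot d le_rfl) ?_ ?_
      · intro g
        induction g using QuotientGroup.induction_on with
        | H g => rw [← QuotientGroup.mk_pow, hG, QuotientGroup.mk_one]
      · exact (Group.rank_le_of_surjective _ (QuotientGroup.mk'_surjective N)).trans hr
    have hrank : Group.rank N ≤ B * r :=
      (Subgroup.rank_le_index_mul_rank N).trans (Nat.mul_le_mul hidx hr)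
    have hcard : Nat.card N ≤ n ^ (B * r) := by
      let inst : CommGroup N :=
        { (inferInstance : Group N) with
          mul_comm := fun a b => Subtype.ext (mul_comm_of_mem_derivedSeries hd a.2 b.2) }
      have h := card_dvd_exponent_pow_rank' N (n := n) fun g => Subtype.ext (hG g)
      exact (Nat.le_of_dvd (pow_pos hn _) h).trans (Nat.pow_le_pow_right hn hrank)
    rw [← Subgroup.card_mul_index N]
    exact Nat.mul_le_mul hcard hidx

/-- If `H` is a subgroup with `H / Z(H)` of exponent dividing `n`, in a group of derived length at
most `d`, then `h ↦ h ^ m` is an endomorphism of `H` for some bounded `m`, which may be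
chosen divisible by a prescribed `q`. -/
lemma exists_pow_mul (n : ℕ) (hn : 0 < n) (d q : ℕ) (hq : 0 < q) :
    ∃ m : ℕ, 0 < m ∧ q ∣ m ∧ ∀ (G : Type) [Group G] [Finite G] (H : Subgroup G),
      derivedSeries G d = ⊥ → (∀ h ∈ H, ∀ y ∈ H, y * h ^ n = h ^ n * y) →
      ∀ x ∈ H, ∀ y ∈ H, (x * y) ^ m = x ^ m * y ^ m := by
  obtain ⟨B, hB⟩ := exists_card_bound n hn 2 d
  refine ⟨q * B.factorial, Nat.mul_pos hq B.factorial_pos, dvd_mul_right _ _, ?_⟩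
  intro G _ _ H hd hH x hx y hy
  let L := Subgroup.closure ({x, y} : Set G)
  have hLH : L ≤ H := by
    rw [Subgroup.closure_le]
    rintro z (rfl | rfl)
    exacts [hx, hy]
  have hxL : x ∈ L := Subgroup.subset_closure (by simp)
  have hyL : y ∈ L := Subgroup.subset_closure (by simp)
  have hdL : derivedSeries L d = ⊥ := by
    have h := map_derivedSeries_le_derivedSeries L.subtype d
    rw [hd, le_bot_iff, Subgroup.map_eq_bot_iff_of_injective _ L.subtype_injective] at h
    exact h
  have hidx : (Subgroup.center L).index ≤ B := by
    refine hB _ (derivedSeries_quotient_eq_bot d (hdL ▸ bot_le)) ?_ ?_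
    · intro g
      induction g using QuotientGroup.induction_on with
      | H g =>
        rw [← QuotientGroup.mk_pow, QuotientGroup.eq_one_iff, Subgroup.mem_center_iff]
        exact fun z => Subtype.ext (hH g (hLH g.2) z (hLH z.2))
    · refine (Group.rank_le_of_surjective _ (QuotientGroup.mk'_surjective _)).trans ?_
      refine (Subgroup.rank_closure_finite_le_nat_card _).trans ?_
      rw [Nat.card_coe_set_eq]
      exact (Set.ncard_insert_le x {y}).trans (by rw [Set.ncard_singleton])
  obtain ⟨t, ht⟩ : (Subgroup.center L).index ∣ q * B.factorial :=
    (Nat.dvd_factorial (Nat.pos_of_ne_zero Subgroup.FiniteIndex.index_ne_zero) hidx).mul_left q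
  have h : (MonoidHom.transferCenterPow L (⟨x, hxL⟩ * ⟨y, hyL⟩)) ^ t =
      (MonoidHom.transferCenterPow L ⟨x, hxL⟩) ^ t *
        (MonoidHom.transferCenterPow L ⟨y, hyL⟩) ^ t := by
    rw [map_mul]
    refine Commute.mul_pow (Subtype.ext ?_) t
    exact Subgroup.mem_center_iff.mp (MonoidHom.transferCenterPow L ⟨y, hyL⟩).2 _
  have h' := congrArg (fun z : Subgroup.center L => ((z : L) : G)) h
  simp only [Subgroup.coe_mul, Subgroup.coe_pow, MonoidHom.transferCenterPow_apply] at h'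
  rw [ht, pow_mul, pow_mul, pow_mul]
  exact h'

lemma map_of_mem_negSet {G : Type*} [Group G] {φ : G ≃* G} (hφ : ∀ g, φ (φ g) = g) {x : G}
    (hx : x ∈ negSet φ) : φ x = x⁻¹ := by
  obtain ⟨g, rfl⟩ := hx
  simp [hφ]

/-- The `p`-th power of a fixed point in an abelian normal `φ`-invariant subgroup `M` commutes with
`G_{-φ}`. -/
lemma commute_of_fixed_s15 {G : Type*} [Group G] {p : ℕ} (hodd : Odd p) {φ : G ≃* G}
    (hφ : ∀ g, φ (φ g) = g) (hneg : ∀ x ∈ negSet φ, x ^ p = 1) {M : Subgroup G} [M.Normal]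
    (hMφ : ∀ u ∈ M, φ u ∈ M) (hM : ∀ u ∈ M, ∀ v ∈ M, u * v = v * u)
    {a : G} (ha : a ∈ M) (haφ : φ a = a) {x : G} (hx : x ∈ negSet φ) : Commute x (a ^ p) := by
  have hb : x⁻¹ * a * x ∈ M := by
    simpa using Subgroup.Normal.conj_mem ‹M.Normal› a ha x⁻¹
  have hφb : φ (x⁻¹ * a * x) = x * a * x⁻¹ := by
    simp [map_of_mem_negSet hφ hx, haφ]
  have hcomm : Commute (x⁻¹ * a * x)⁻¹ (φ (x⁻¹ * a * x)) :=
    hM _ (M.inv_mem hb) _ (hMφ _ hb)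
  have h1 := hneg _ ⟨x⁻¹ * a * x, rfl⟩
  rw [hcomm.mul_pow, inv_pow, inv_mul_eq_one, hφb, conj_pow] at h1
  have h2 : (x⁻¹ * a * x) ^ p = x⁻¹ * a ^ p * x := by
    simpa using conj_pow (a := x⁻¹) (b := a) (i := p)
  rw [h2] at h1
  have hsq : Commute (x ^ 2) (a ^ p) := by
    have h3 : x * (x⁻¹ * a ^ p * x) * x = x * (x * a ^ p * x⁻¹) * x := by rw [h1]
    rw [Commute, SemiconjBy]
    simpa [mul_assoc, pow_two] using h3.symm
  obtain ⟨k, hk⟩ := hodd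
  -- Since `p = 2 * k + 1` and `x ^ p = 1`, the element `x` is a power of `x ^ 2`.
  have hxk : (x ^ 2) ^ (k + 1) = x := by
    rw [← pow_mul, show 2 * (k + 1) = p + 1 by omega, pow_succ, hneg x hx, one_mul]
  rw [← hxk]
  exact hsq.pow_left _

/-- The inductive core: `[G, φ]` has exponent dividing a number depending only on `p` and the
derived length. -/
lemma exists_pow_eq_one_on_closure (p : ℕ) (hp : p.Prime) (hodd : Odd p) (d : ℕ) :
    ∃ m : ℕ, 0 < m ∧ ∀ (G : Type) [Group G] [Finite G] (φ : G ≃* G),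
      (∀ g, φ (φ g) = g) → (∀ x ∈ negSet φ, x ^ p = 1) → derivedSeries G d = ⊥ →
      ∀ h ∈ Subgroup.closure (negSet φ), h ^ m = 1 := by
  induction d with
  | zero =>
    refine ⟨1, one_pos, fun G _ _ φ _ _ hd h _ => ?_⟩
    have : h ∈ derivedSeries G 0 := Subgroup.mem_top h
    rw [hd, Subgroup.mem_bot] at this
    rw [this, one_pow]
  | succ d ih =>
    obtain ⟨k, hk, ih⟩ := ih
    obtain ⟨m, hm, hpm, hmul⟩ := exists_pow_mul (k * (2 * p))
      (Nat.mul_pos hk (Nat.mul_pos two_pos hp.pos)) (d + 1) p hp.pos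
    refine ⟨m, hm, fun G _ _ φ hφ hneg hd => ?_⟩
    set M := derivedSeries G d with hMdef
    have hMn : M.Normal := derivedSeries_normal G d
    have hM : ∀ u ∈ M, ∀ v ∈ M, u * v = v * u :=
      fun u hu v hv => mul_comm_of_mem_derivedSeries hd hu hv
    have hmap : M.map (φ : G →* G) = M :=
      Subgroup.characteristic_iff_map_eq.mp (derivedSeries_characteristic G d) φ
    have hMφ : ∀ u ∈ M, φ u ∈ M := fun u hu => by
      rw [← hmap]
      exact Subgroup.mem_map_of_mem _ hu
    let ψ : G ⧸ M ≃* G ⧸ M := QuotientGroup.congr M M φ hmap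
    have hψ : ∀ g : G, ψ (g : G ⧸ M) = (φ g : G) := fun g => rfl
    have hkM : ∀ h ∈ Subgroup.closure (negSet φ), h ^ k ∈ M := by
      intro h hh
      rw [← QuotientGroup.eq_one_iff, QuotientGroup.mk_pow]
      refine ih (G ⧸ M) ψ ?_ ?_ (derivedSeries_quotient_eq_bot d le_rfl) _ ?_
      · intro g
        induction g using QuotientGroup.induction_on with
        | H g => rw [hψ, hψ, hφ]
      · rintro _ ⟨g, rfl⟩
        induction g using QuotientGroup.induction_on with
        | H g =>
          rw [hψ, ← QuotientGroup.mk_inv, ← QuotientGroup.mk_mul, ← QuotientGroup.mk_pow,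
            hneg _ ⟨g, rfl⟩, QuotientGroup.mk_one]
      · have hle : Subgroup.closure (negSet φ) ≤
            (Subgroup.closure (negSet ψ)).comap (QuotientGroup.mk' M) := by
          rw [Subgroup.closure_le]
          rintro _ ⟨g, rfl⟩
          exact Subgroup.subset_closure ⟨(g : G ⧸ M), rfl⟩
        exact hle hh
    have hcentral : ∀ h ∈ Subgroup.closure (negSet φ), ∀ y ∈ Subgroup.closure (negSet φ),
        y * h ^ (k * (2 * p)) = h ^ (k * (2 * p)) * y := by
      intro h hh y hy
      have hu := hkM h hh
      rw [pow_mul]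
      set u := h ^ k
      have hc : Commute u (φ u) := hM u hu _ (hMφ u hu)
      have h1 : φ u ^ p = u ^ p := by
        have h2 := hneg _ ⟨u, rfl⟩
        rw [hc.inv_left.mul_pow, inv_pow, inv_mul_eq_one] at h2
        exact h2.symm
      have h3 : u ^ (2 * p) = (u * φ u) ^ p := by
        rw [hc.mul_pow, h1, ← pow_add, two_mul]
      have hfix : φ (u * φ u) = u * φ u := by
        rw [map_mul, hφ]
        exact hc.symm
      rw [h3]
      have hle : Subgroup.closure (negSet φ) ≤ Subgroup.centralizer {(u * φ u) ^ p} := by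
        rw [Subgroup.closure_le]
        intro x hx
        rw [SetLike.mem_coe, Subgroup.mem_centralizer_singleton_iff]
        exact commute_of_fixed_s15 hodd hφ hneg hMφ hM (M.mul_mem hu (hMφ u hu)) hfix hx
      exact Subgroup.mem_centralizer_singleton_iff.mp (hle hy)
    have hhom := hmul G (Subgroup.closure (negSet φ)) hd hcentral
    intro h hh
    induction hh using Subgroup.closure_induction with
    | mem x hx =>
      obtain ⟨t, rfl⟩ := hpm
      rw [pow_mul, hneg x hx, one_pow]
    | one => exact one_pow m
    | mul x y hx hy ihx ihy => rw [hhom x hx y hy, ihx, ihy, one_mul]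
    | inv x _ ihx => rw [inv_pow, ihx, inv_one]

theorem exponent_bounded_pgroup :
    ∃ f : ℕ → ℕ → ℕ → ℕ, ∀ (p c d : ℕ), p.Prime → Odd p →
      ∀ (G : Type) [Group G] [Finite G] (φ : G ≃* G),
      (∀ g, φ (φ g) = g) → IsPGroup p G →
      upperCentralSeries ↥(fixedSubgroup φ) c = ⊤ →
      (∀ x ∈ negSet φ, x ^ p = 1) →
      derivedSeries G d = ⊥ →
      Monoid.exponent ↥(Subgroup.closure (negSet φ)) ≤ f c d p := by
  have key : ∀ p d : ℕ, ∃ m : ℕ, 0 < m ∧ (p.Prime → Odd p → ∀ (G : Type) [Group G] [Finite G]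
      (φ : G ≃* G), (∀ g, φ (φ g) = g) → (∀ x ∈ negSet φ, x ^ p = 1) → derivedSeries G d = ⊥ →
      ∀ h ∈ Subgroup.closure (negSet φ), h ^ m = 1) := by
    intro p d
    by_cases hp : p.Prime ∧ Odd p
    · obtain ⟨m, hm, h⟩ := exists_pow_eq_one_on_closure p hp.1 hp.2 d
      exact ⟨m, hm, fun _ _ => h⟩
    · exact ⟨1, one_pos, fun h₁ h₂ => absurd ⟨h₁, h₂⟩ hp⟩
  choose m hm key using key
  refine ⟨fun _ d p => m p d, ?_⟩
  intro p c d hp hodd G _ _ φ hφ _ _ hx hd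
  refine Nat.le_of_dvd (hm p d) (Monoid.exponent_dvd_of_forall_pow_eq_one fun g => ?_)
  exact Subtype.ext (key p d hp hodd G φ hφ hx hd g g.2)
end

section
/- Let n be a positive integer. There exists a function f(n) such that the following holds: if G is a finite group of odd order admitting an involutory automorphism φ whose fixed-point subgroup G_φ has order at most n, then G has a subgroup of index at most f(n) which is nilpotent of class at most two. -/
section

open Subgroup
open scoped commutatorElement

/-- In a group all of whose conjugacy classes have size at most `d`, some subgroup of `d`-bounded
index is nilpotent of class at most two. -/
lemma exists_class_two_of_bfc {K : Type*} [Group K] [Finite K] (d : ℕ)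
    (hd : ∀ x : K, (centralizer {x}).index ≤ d) :
    ∃ E : Subgroup K, E.index ≤ d ^ d * d ^ (d * d) ∧
      ∀ x ∈ E, ∀ y ∈ E, ∀ z ∈ E, z * ⁅x, y⁆ = ⁅x, y⁆ * z := by
  classical
  have hd0 : 0 < d :=
    lt_of_lt_of_le (Nat.pos_of_ne_zero (index_ne_zero_of_finite (H := centralizer {(1 : K)}))) (hd 1)
  obtain ⟨a, ha⟩ := Finite.exists_max fun x : K => (centralizer {x}).index
  let Q := K ⧸ centralizer {a}
  have : Fintype Q := Fintype.ofFinite Q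
  have hQ : Fintype.card Q ≤ d := by
    rw [← Nat.card_eq_fintype_card]
    exact hd a
  -- As `q` ranges over `Q`, `conj q` ranges over the conjugates of `a`, without repetition.
  let conj : Q → K := fun q => q.out * a * (q.out)⁻¹
  have hconj : ∀ x y : K, ∀ b : K, x * b * x⁻¹ = y * b * y⁻¹ ↔
      (QuotientGroup.mk x : K ⧸ centralizer {b}) = QuotientGroup.mk y := by
    intro x y b
    rw [QuotientGroup.eq, mem_centralizer_singleton_iff]
    constructor
    · intro h
      calc x⁻¹ * y * b = x⁻¹ * (y * b * y⁻¹) * y := by group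
        _ = x⁻¹ * (x * b * x⁻¹) * y := by rw [h]
        _ = b * (x⁻¹ * y) := by group
    · intro h
      calc x * b * x⁻¹ = x * (b * (x⁻¹ * y)) * y⁻¹ := by group
        _ = x * (x⁻¹ * y * b) * y⁻¹ := by rw [h]
        _ = y * b * y⁻¹ := by group
  have hsurj : ∀ x : K, ∃ q, x * a * x⁻¹ = conj q := by
    intro x
    refine ⟨QuotientGroup.mk x, (hconj _ _ _).2 ?_⟩
    exact (QuotientGroup.out_eq' _).symm
  let C : Subgroup K := ⨅ q : Q, centralizer {q.out}
  have hC : C.index ≤ d ^ d := by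
    calc C.index ≤ ∏ q : Q, (centralizer {q.out}).index := index_iInf_le _
      _ ≤ ∏ _q : Q, d := Finset.prod_le_prod' fun q _ => hd _
      _ = d ^ Fintype.card Q := by simp
      _ ≤ d ^ d := Nat.pow_le_pow_right hd0 hQ
  let s : Q × Q → K := fun p => conj p.1 * (conj p.2)⁻¹
  -- By maximality of the class of `a`, the elements `c * conj q` exhaust the class of `c * a`.
  have key : ∀ c ∈ C, ∀ x : K, ∃ p, c⁻¹ * x * c * x⁻¹ = s p := by
    intro c hc x
    have hcq : ∀ q : Q, q.out * (c * a) * (q.out)⁻¹ = c * conj q := by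
      intro q
      have h := (mem_iInf.1 hc) q
      rw [mem_centralizer_singleton_iff] at h
      calc q.out * (c * a) * (q.out)⁻¹ = (q.out * c) * a * (q.out)⁻¹ := by group
        _ = c * conj q := by rw [← h]; simp only [conj]; group
    let F : Q → K ⧸ centralizer {c * a} := fun q => QuotientGroup.mk q.out
    have hF : Function.Injective F := by
      intro q r h
      have h1 := (hconj q.out r.out (c * a)).2 h
      rw [hcq, hcq] at h1
      have h2 := (hconj q.out r.out a).1 (mul_left_cancel h1)
      rwa [QuotientGroup.out_eq', QuotientGroup.out_eq'] at h2
    have hFb := hF.bijective_of_nat_card_le (ha (c * a))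
    obtain ⟨q, hq⟩ := hFb.2 (QuotientGroup.mk x)
    have h1 := (hconj q.out x (c * a)).2 hq
    rw [hcq] at h1
    obtain ⟨r, hr⟩ := hsurj x
    refine ⟨(q, r), ?_⟩
    calc c⁻¹ * x * c * x⁻¹ = c⁻¹ * (x * (c * a) * x⁻¹) * (x * a * x⁻¹)⁻¹ := by group
      _ = c⁻¹ * (c * conj q) * (conj r)⁻¹ := by rw [← h1, hr]
      _ = s (q, r) := by simp only [s]; group
  let Z : Subgroup K := ⨅ p : Q × Q, centralizer {s p}
  have hZ : Z.index ≤ d ^ (d * d) := by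
    calc Z.index ≤ ∏ p : Q × Q, (centralizer {s p}).index := index_iInf_le _
      _ ≤ ∏ _p : Q × Q, d := Finset.prod_le_prod' fun q _ => hd _
      _ = d ^ (Fintype.card Q * Fintype.card Q) := by simp
      _ ≤ d ^ (d * d) := Nat.pow_le_pow_right hd0 (Nat.mul_le_mul hQ hQ)
  refine ⟨C ⊓ Z, index_inf_le.trans (Nat.mul_le_mul hC hZ), ?_⟩
  intro x hx y _ z hz
  obtain ⟨p, hp⟩ := key x⁻¹ (C.inv_mem hx.1) y
  have h := (mem_iInf.1 hz.2) p
  rw [mem_centralizer_singleton_iff, ← hp] at h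
  simpa [commutatorElement_def] using h

/-- The index of the centralizer is the size of the conjugacy class, and the class of `x * y` lies
in the product of the classes of `x` and `y`. -/
lemma index_centralizer_mul_le {G : Type*} [Group G] [Finite G] (x y : G) :
    (centralizer {x * y}).index ≤ (centralizer {x}).index * (centralizer {y}).index := by
  have h : centralizer {x} ⊓ centralizer {y} ≤ centralizer {x * y} := by
    intro g hg
    obtain ⟨h1, h2⟩ := mem_inf.1 hg
    rw [mem_centralizer_singleton_iff] at h1 h2
    rw [mem_centralizer_singleton_iff, ← mul_assoc, h1, mul_assoc, h2, mul_assoc]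
  exact (Nat.le_of_dvd (Nat.pos_of_ne_zero index_ne_zero_of_finite) (index_dvd_of_le h)).trans
    index_inf_le

lemma index_centralizer_inv_le {G : Type*} [Group G] [Finite G] (x : G) :
    (centralizer {x⁻¹}).index ≤ (centralizer {x}).index := by
  have h : centralizer {x} ≤ centralizer {x⁻¹} := by
    intro g hg
    rw [mem_centralizer_singleton_iff] at *
    exact (Commute.inv_right (show Commute g x from hg)).eq
  exact Nat.le_of_dvd (Nat.pos_of_ne_zero index_ne_zero_of_finite) (index_dvd_of_le h)

/-- If a proportion of at least `1 / m` of the elements of `G` have at most `m` conjugates, then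
for some `m`-bounded `k` the elements with at most `m ^ k` conjugates form a subgroup, whose index
is at most `m`. -/
lemma exists_bfc_subgroup {G : Type*} [Group G] [Finite G] (m : ℕ) (hm : 0 < m)
    (h : Nat.card G ≤ m * Set.ncard {x : G | (centralizer {x}).index ≤ m}) :
    ∃ H : Subgroup G, H.index ≤ m ∧ ∀ x ∈ H, (centralizer {x}).index ≤ m ^ (2 * 5 ^ m) := by
  classical
  let D : ℕ → Set G := fun k => {x | (centralizer {x}).index ≤ m ^ k}
  have hmul : ∀ i j x y, x ∈ D i → y ∈ D j → x * y ∈ D (i + j) := by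
    intro i j x y hx hy
    change (centralizer {x * y}).index ≤ m ^ (i + j)
    rw [pow_add]
    exact (index_centralizer_mul_le x y).trans (Nat.mul_le_mul hx hy)
  have hinv : ∀ i x, x ∈ D i → x⁻¹ ∈ D i := fun i x hx => (index_centralizer_inv_le x).trans hx
  have hone : ∀ i, (1 : G) ∈ D i := by
    intro i
    change (centralizer {(1 : G)}).index ≤ m ^ i
    have : centralizer {(1 : G)} = ⊤ := by
      ext g
      simp [mem_centralizer_singleton_iff]
    rw [this, index_top]
    exact Nat.one_le_pow _ _ hm
  have hmono : ∀ i j, i ≤ j → D i ⊆ D j := fun i j hij x hx =>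
    le_trans hx (Nat.pow_le_pow_right hm hij)
  have hD1 : Nat.card G ≤ m * (D 1).ncard := by simpa [D] using h
  -- A `y ∈ D (4k)` outside `D (2k)` makes `D k` and `y D k` disjoint subsets of `D (5k)`.
  have hgrow : ∀ k, D (4 * k) ⊆ D (2 * k) ∨ 2 * (D k).ncard ≤ (D (5 * k)).ncard := by
    intro k
    by_cases hk : D (4 * k) ⊆ D (2 * k)
    · exact Or.inl hk
    right
    obtain ⟨y, hy4, hy2⟩ := Set.not_subset.1 hk
    have hdisj : Disjoint (D k) ((fun g => y * g) '' D k) := by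
      rw [Set.disjoint_left]
      rintro _ hg ⟨g, hg', rfl⟩
      apply hy2
      have := hmul k k _ _ hg (hinv k _ hg')
      rwa [mul_inv_cancel_right, ← two_mul] at this
    have hsub : D k ∪ ((fun g => y * g) '' D k) ⊆ D (5 * k) := by
      rintro g (hg | ⟨g, hg, rfl⟩)
      · exact hmono k _ (by omega) hg
      · have := hmul (4 * k) k _ _ hy4 hg
        rwa [show 4 * k + k = 5 * k by ring] at this
    have h1 := Set.ncard_le_ncard hsub (Set.toFinite _)
    rw [Set.ncard_union_eq hdisj (Set.toFinite _) (Set.toFinite _),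
      Set.ncard_image_of_injective _ (mul_right_injective y)] at h1
    omega
  have hex : ∃ i ≤ m, D (4 * 5 ^ i) ⊆ D (2 * 5 ^ i) := by
    by_contra hcon
    push Not at hcon
    have hpow : ∀ i ≤ m, 2 ^ i * (D 1).ncard ≤ (D (5 ^ i)).ncard := by
      intro i
      induction i with
      | zero => intro _; simp
      | succ i ih =>
        intro hi
        have h1 := ih (by omega)
        have h2 := (hgrow (5 ^ i)).resolve_left (hcon i (by omega))
        rw [pow_succ' 5, pow_succ' 2, mul_assoc]
        omega
    have h1 := hpow m le_rfl
    have h2 : (D (5 ^ m)).ncard ≤ Nat.card G := Set.ncard_le_card _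
    have h3 : m < 2 ^ m := Nat.lt_two_pow_self
    have h4 : 0 < (D 1).ncard := (Set.ncard_pos (Set.toFinite _)).2 ⟨1, hone 1⟩
    have h5 : m * (D 1).ncard < 2 ^ m * (D 1).ncard := Nat.mul_lt_mul_of_pos_right h3 h4
    omega
  obtain ⟨i, him, hi⟩ := hex
  let H : Subgroup G :=
    { carrier := D (2 * 5 ^ i)
      one_mem' := hone _
      mul_mem' := by
        intro x y hx hy
        apply hi
        have := hmul _ _ _ _ hx hy
        rwa [← two_mul, ← mul_assoc] at this
      inv_mem' := by
        intro x hx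
        exact hinv _ _ hx }
  refine ⟨H, ?_, ?_⟩
  · have h1 : (D 1).ncard ≤ Nat.card H := by
      rw [← SetLike.coe_sort_coe, Nat.card_coe_set_eq]
      exact Set.ncard_le_ncard 
        (hmono 1 _ (by have : 0 < 5 ^ i := by positivity
                       omega))
        (Set.toFinite _)
    have h2 := H.card_mul_index
    have h3 : 0 < Nat.card H := Nat.card_pos
    have h4 : Nat.card H * H.index ≤ Nat.card H * m := by
      rw [h2, mul_comm]
      exact hD1.trans (Nat.mul_le_mul_left _ h1)
    exact Nat.le_of_mul_le_mul_left h4 h3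
  · intro x hx
    refine le_trans (show _ ≤ m ^ (2 * 5 ^ i) from hx) (Nat.pow_le_pow_right hm ?_)
    exact Nat.mul_le_mul_left _ (Nat.pow_le_pow_right (by norm_num) him)

/-- If `φ` has at most `n` fixed points, it inverts at least `|G| / n` elements. -/
lemma card_le_mul_inverted {G : Type*} [Group G] [Finite G] (φ : G ≃* G) (n : ℕ)
    (hφ : ∀ g, φ (φ g) = g) (hn : Nat.card (fixedSubgroup φ) ≤ n) :
    Nat.card G ≤ n * Set.ncard {g : G | φ g = g⁻¹} := by
  let F : G ⧸ fixedSubgroup φ → {g : G | φ g = g⁻¹} := fun q =>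
    ⟨q.out * (φ q.out)⁻¹, by simp [hφ]⟩
  have hF : Function.Injective F := by
    intro q r h
    have h1 : q.out * (φ q.out)⁻¹ = r.out * (φ r.out)⁻¹ := congrArg Subtype.val h
    have h2 : (QuotientGroup.mk q.out : G ⧸ fixedSubgroup φ) = QuotientGroup.mk r.out := by
      rw [QuotientGroup.eq]
      change φ (q.out⁻¹ * r.out) = q.out⁻¹ * r.out
      rw [map_mul, map_inv]
      calc (φ q.out)⁻¹ * φ r.out = q.out⁻¹ * (q.out * (φ q.out)⁻¹) * φ r.out := by group
        _ = q.out⁻¹ * (r.out * (φ r.out)⁻¹) * φ r.out := by rw [h1]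
        _ = q.out⁻¹ * r.out := by group
    rwa [QuotientGroup.out_eq', QuotientGroup.out_eq'] at h2
  have h1 := Nat.card_le_card_of_injective F hF
  rw [Nat.card_coe_set_eq] at h1
  rw [← (fixedSubgroup φ).card_mul_index]
  exact Nat.mul_le_mul hn h1

/-- The solutions `g` of `φ g = g⁻¹`, `φ (x g) = (x g)⁻¹` lie in one right coset of `C(x)`. -/
lemma ncard_inverted_inter_le {G : Type*} [Group G] [Finite G] (φ : G ≃* G) (x : G) :
    Set.ncard {g : G | φ g = g⁻¹ ∧ φ (x * g) = (x * g)⁻¹} ≤ Nat.card (centralizer {x}) := by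
  set T := {g : G | φ g = g⁻¹ ∧ φ (x * g) = (x * g)⁻¹} with hT
  rcases T.eq_empty_or_nonempty with h | ⟨g₀, hg₀⟩
  · simp [h]
  have hx : ∀ g ∈ T, φ x = g⁻¹ * x⁻¹ * g := by
    rintro g ⟨h1, h2⟩
    rw [map_mul, h1, mul_inv_rev] at h2
    rw [← h2]
    group
  have hmem : ∀ g ∈ T, g * g₀⁻¹ ∈ centralizer {x} := by
    intro g hg
    have h : g⁻¹ * x⁻¹ * g = g₀⁻¹ * x⁻¹ * g₀ := (hx g hg).symm.trans (hx g₀ hg₀)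
    have h' : g⁻¹ * x * g = g₀⁻¹ * x * g₀ := by
      have := congrArg (·⁻¹) h
      simpa [mul_assoc] using this
    rw [mem_centralizer_singleton_iff]
    calc g * g₀⁻¹ * x = g * (g₀⁻¹ * x * g₀) * g₀⁻¹ := by group
      _ = g * (g⁻¹ * x * g) * g₀⁻¹ := by rw [h']
      _ = x * (g * g₀⁻¹) := by group
  rw [← Nat.card_coe_set_eq]
  refine Nat.card_le_card_of_injective
    (fun g : T => (⟨g * g₀⁻¹, hmem g g.2⟩ : centralizer {x})) ?_
  intro g g' h
  exact Subtype.ext (mul_right_cancel (congrArg Subtype.val h))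

/-- At least `|G| / (2n²)` elements have at most `2n²` conjugates. -/
lemma card_le_mul_small_classes {G : Type*} [Group G] [Finite G] (φ : G ≃* G) (n : ℕ)
    (hφ : ∀ g, φ (φ g) = g) (hn : Nat.card (fixedSubgroup φ) ≤ n) :
    Nat.card G ≤ (2 * n ^ 2) *
      Set.ncard {x : G | (centralizer {x}).index ≤ 2 * n ^ 2} := by
  classical
  have : Fintype G := Fintype.ofFinite G
  set m := 2 * n ^ 2 with hm
  set N := Nat.card G with hN
  have hNpos : 0 < N := Nat.card_pos
  set I := Finset.univ.filter fun g : G => φ g = g⁻¹ with hI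
  have hIcard : N ≤ n * I.card := by
    have := card_le_mul_inverted φ n hφ hn
    rwa [Set.ncard_eq_toFinset_card', Set.toFinset_ofPred] at this
  -- Double count the pairs `(g, x * g)` in `I × I`.
  have hsum : I.card * I.card = ∑ x : G, (I.filter fun g => x * g ∈ I).card := by
    have h1 : ∀ g ∈ I, ∑ x : G, (if x * g ∈ I then 1 else 0) = I.card := by
      intro g _
      rw [Fintype.sum_equiv (Equiv.mulRight g) (fun x => if x * g ∈ I then 1 else 0) (fun y => if y ∈ I then 1 else 0)
        (fun x => rfl)]
      simp
    simp_rw [Finset.card_filter]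
    rw [Finset.sum_comm, Finset.sum_congr rfl h1]
    simp
  have hle : ∀ x : G, (I.filter fun g => x * g ∈ I).card ≤ Nat.card (centralizer {x}) := by
    intro x
    refine le_trans (le_of_eq ?_) (ncard_inverted_inter_le φ x)
    rw [Set.ncard_eq_toFinset_card', Set.toFinset_ofPred]
    congr 1
    ext g
    simp [hI]
  set X := Finset.univ.filter fun x : G => (centralizer {x}).index ≤ m with hX
  have hXcard : Set.ncard {x : G | (centralizer {x}).index ≤ m} = X.card := by
    rw [Set.ncard_eq_toFinset_card', Set.toFinset_ofPred]
  rw [hXcard]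
  -- A centralizer of index above `m` has order at most `N / m`.
  have hbound : ∀ x : G, m * Nat.card (centralizer {x}) ≤ (if x ∈ X then m * N else 0) + N := by
    intro x
    have hci := (centralizer {x}).card_mul_index
    rw [← hN] at hci
    by_cases hx : x ∈ X
    · rw [if_pos hx]
      have : Nat.card (centralizer {x}) ≤ N := card_le_card_group _
      exact (Nat.mul_le_mul_left m this).trans (Nat.le_add_right _ _)
    · rw [if_neg hx, zero_add, ← hci, mul_comm]
      refine Nat.mul_le_mul_left _ ?_
      simp only [hX, Finset.mem_filter, Finset.mem_univ, true_and] at hx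
      omega
  have htot : m * (I.card * I.card) ≤ X.card * (m * N) + N * N := by
    rw [hsum, Finset.mul_sum]
    calc _ ≤ ∑ x : G, ((if x ∈ X then m * N else 0) + N) :=
          Finset.sum_le_sum fun x _ => (Nat.mul_le_mul_left m (hle x)).trans (hbound x)
      _ = _ := by
          rw [Finset.sum_add_distrib]
          simp [hN, Nat.card_eq_fintype_card]
  have h2 : 2 * (N * N) ≤ m * (I.card * I.card) := by
    have := Nat.mul_le_mul hIcard hIcard
    rw [hm]
    nlinarith
  have h3 : N * N ≤ (m * X.card) * N := by nlinarith
  exact Nat.le_of_mul_le_mul_right h3 hNpos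

end

open scoped commutatorElement

theorem bounded_index_nilpotent_subgroup :
    ∃ f : ℕ → ℕ, ∀ (n : ℕ), 0 < n →
      ∀ (G : Type) [Group G] [Finite G] (φ : G ≃* G),
      (∀ g, φ (φ g) = g) → Odd (Nat.card G) →
      Nat.card ↥(fixedSubgroup φ) ≤ n →
      ∃ H : Subgroup G, H.index ≤ f n ∧ upperCentralSeries ↥H 2 = ⊤ := by
  let m : ℕ → ℕ := fun n => 2 * n ^ 2
  let d : ℕ → ℕ := fun n => m n ^ (2 * 5 ^ m n)
  refine ⟨fun n => (d n ^ d n * d n ^ (d n * d n)) * m n, ?_⟩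
  intro n hn0 G _ _ φ hφ _ hn
  have hm : 0 < m n := by positivity
  obtain ⟨H, hHi, hH⟩ := exists_bfc_subgroup (m n) hm (card_le_mul_small_classes φ n hφ hn)
  have hHd : ∀ x : H, (Subgroup.centralizer {x}).index ≤ d n := by
    intro x
    have h1 : (Subgroup.centralizer {(x : G)}).subgroupOf H = Subgroup.centralizer {x} := by
      ext g
      rw [Subgroup.mem_subgroupOf, Subgroup.mem_centralizer_singleton_iff, Subgroup.mem_centralizer_singleton_iff,
        Subtype.ext_iff]
      rfl
    rw [← h1]
    refine le_trans ?_ (hH x x.2)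
    have h2 := Subgroup.relIndex_le_of_le_right (H := Subgroup.centralizer {(x : G)})
      (le_top (a := H)) (by rw [Subgroup.relIndex_top_right]; exact Subgroup.index_ne_zero_of_finite)
    rwa [Subgroup.relIndex_top_right] at h2
  obtain ⟨E, hEi, hE⟩ := exists_class_two_of_bfc (d n) hHd
  refine ⟨E.map H.subtype, ?_, ?_⟩
  · rw [Subgroup.index_map_subtype]
    exact Nat.mul_le_mul hEi hHi
  · change Subgroup.upperCentralSeries _ 2 = ⊤
    rw [eq_top_iff]
    rintro x -
    rw [Subgroup.mem_upperCentralSeries_succ_iff]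
    intro y
    rw [Subgroup.mem_upperCentralSeries_succ_iff]
    intro z
    rw [Subgroup.upperCentralSeries_zero, Subgroup.mem_bot]
    obtain ⟨x', hx, hx'⟩ := Subgroup.mem_map.1 x.2
    obtain ⟨y', hy, hy'⟩ := Subgroup.mem_map.1 y.2
    obtain ⟨z', hz, hz'⟩ := Subgroup.mem_map.1 z.2
    have h : ⁅⁅x', y'⁆, z'⁆ = 1 :=
      commutatorElement_eq_one_iff_mul_comm.2 (hE x' hx y' hy z' hz).symm
    have h' := congrArg H.subtype h
    simp only [commutatorElement_def, map_mul, map_inv, map_one, hx', hy', hz'] at h'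
    apply Subtype.ext
    simpa [commutatorElement_def] using h'
end

section
/- Let r be a positive integer. There exists a function f(r) such that every finite soluble group G whose derived subgroup G′ has rank at most r has Fitting height at most f(r). -/
/-- A group `G` has Fitting height at most `n`: there is an ascending series
`⊥ = F 0 ≤ F 1 ≤ ... ≤ F n = ⊤` of normal subgroups of `G` with nilpotent factors. -/
def fittingHeightLE (G : Type*) [Group G] (n : ℕ) : Prop :=
  ∃ F : ℕ → Subgroup G, F 0 = ⊥ ∧ F n = ⊤ ∧ (∀ i, F i ≤ F (i + 1)) ∧
    ∃ hnorm : ∀ i, (F i).Normal,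
      ∀ i, Group.IsNilpotent ((F (i + 1)).map (@QuotientGroup.mk' G _ (F i) (hnorm i)))

/-! ### Derived series and permutation actions -/

/-- A finite soluble group has derived length at most its order, since its derived series is
strictly decreasing until it reaches `⊥`. -/
theorem derivedSeries_card_eq_bot (Q : Type*) [Group Q] [Finite Q] [Group.IsSolvable Q] :
    derivedSeries Q (Nat.card Q) = ⊥ := by
  have key : ∀ i, derivedSeries Q i = ⊥ ∨ Nat.card (derivedSeries Q i) + i ≤ Nat.card Q := by
    intro i
    induction i with
    | zero => right; simp
    | succ i ih =>
      by_cases hi : derivedSeries Q i = ⊥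
      · left
        exact le_bot_iff.mp (hi ▸ derivedSeries_antitone (G := Q) (Nat.le_succ i))
      · right
        have h1 := ih.resolve_left hi
        have hlt : derivedSeries Q (i + 1) < derivedSeries Q i := by
          rw [derivedSeries_succ]
          exact Group.IsSolvable.commutator_lt_of_ne_bot hi
        have h2 : Nat.card (derivedSeries Q (i + 1)) < Nat.card (derivedSeries Q i) :=
          Set.Finite.card_lt_card (Set.toFinite _) hlt
        omega
  refine (key _).resolve_right fun h => ?_
  have : 0 < Nat.card (derivedSeries Q (Nat.card Q)) := Nat.card_pos
  omega

/-- If a soluble group acts on at most `m` points, its permutation image has order at most `m!`, so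
the `m!`-th derived term fixes every point. -/
theorem derivedSeries_smul_eq {G X : Type*} [Group G] [Group.IsSolvable G] [MulAction G X]
    [Finite X] {m : ℕ} (hm : Nat.card X ≤ m) {g : G}
    (hg : g ∈ derivedSeries G m.factorial) (x : X) : g • x = x := by
  classical
  let φ := MulAction.toPermHom G X
  have hcard : Nat.card φ.range ≤ m.factorial := by
    calc Nat.card φ.range ≤ Nat.card (Equiv.Perm X) :=
          Nat.card_le_card_of_injective _ Subtype.val_injective
      _ = (Nat.card X).factorial := Nat.card_perm
      _ ≤ m.factorial := Nat.factorial_le hm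
  have hsol : Group.IsSolvable φ.range := Group.isSolvable_of_surjective φ.rangeRestrict_surjective
  have h1 : φ.rangeRestrict g ∈ derivedSeries φ.range m.factorial :=
    map_derivedSeries_le_derivedSeries φ.rangeRestrict _ ⟨g, hg, rfl⟩
  have h2 : φ.rangeRestrict g ∈ derivedSeries φ.range (Nat.card φ.range) :=
    derivedSeries_antitone _ hcard h1
  rw [derivedSeries_card_eq_bot, Subgroup.mem_bot] at h2
  have h3 : φ g = 1 := congrArg Subtype.val h2
  exact congrArg (fun e : Equiv.Perm X => e x) h3

theorem derivedSeries_add_le_map {G : Type*} [Group G] (K : Subgroup G) {a : ℕ}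
    (hK : derivedSeries G a ≤ K) (b : ℕ) :
    derivedSeries G (a + b) ≤ (derivedSeries K b).map K.subtype := by
  induction b with
  | zero => simpa [← MonoidHom.range_eq_map] using hK
  | succ b ih =>
    rw [← add_assoc, derivedSeries_succ, derivedSeries_succ, Subgroup.map_commutator]
    exact Subgroup.commutator_mono ih ih

/-! ### Weights of normal subgroups with commuting image -/

section Rep
open Module
open scoped commutatorElement

variable {k G V : Type*} [Field k] [Group G] [AddCommGroup V] [Module k V]

/-- If a normal subgroup `N` acts on `V` by commuting operators, each weight `χ` of `N` on `V` is
fixed by `G^(m!)`, where `m ≥ dim V`: the weight spaces are independent, so there are at most `m`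
weights, and `G` permutes them. A weight is encoded as a function on all of `G`, whose values
outside `N` are irrelevant. -/
theorem weight_conj_eq [Group.IsSolvable G] [FiniteDimensional k V] (ρ : Representation k G V)
    (N : Subgroup G) [N.Normal] (hcomm : ∀ x ∈ N, ∀ y ∈ N, Commute (ρ x) (ρ y))
    {m : ℕ} (hm : finrank k V ≤ m)
    (χ : G → k) (w : V) (hw : w ≠ 0) (hχ : ∀ y ∈ N, ρ y w = χ y • w)
    {g : G} (hg : g ∈ derivedSeries G m.factorial) {y : G} (hy : y ∈ N) :
    χ (g⁻¹ * y * g) = χ y := by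
  classical
  let p : (N → k) → Submodule k V := fun ψ => ⨅ y : N, Module.End.eigenspace (ρ (y : G)) (ψ y)
  have hp : iSupIndep p := by
    refine iSupIndep.mono (Module.End.independent_iInf_maxGenEigenspace_of_forall_mapsTo
      (fun y : N => ρ (y : G)) ?_) (fun ψ => iInf_mono fun y => ?_)
    · intro i j c
      exact Module.End.mapsTo_maxGenEigenspace_of_comm (hcomm _ j.2 _ i.2) c
    · exact (Module.End.genEigenspace _ _).monotone le_top
  have hmem : ∀ ψ v, v ∈ p ψ ↔ ∀ y : N, ρ (y : G) v = ψ y • v := by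
    intro ψ v
    simp [p, Submodule.mem_iInf]
  let X := {ψ : N → k // p ψ ≠ ⊥}
  let _ : Fintype X := hp.fintypeNeBotOfFiniteDimensional
  have hX : Nat.card X ≤ m := by
    rw [Nat.card_eq_fintype_card]
    exact hp.subtype_ne_bot_le_finrank.trans hm
  have hstab : ∀ (g : G) (ψ : X), p (fun y => ψ.1 (MulAut.conjNormal g⁻¹ y)) ≠ ⊥ := by
    rintro g ⟨ψ, hψ⟩
    obtain ⟨v, hv, hv0⟩ := (Submodule.ne_bot_iff _).mp hψ
    refine (Submodule.ne_bot_iff _).mpr ⟨ρ g v, (hmem _ _).mpr fun y => ?_, fun h => hv0 ?_⟩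
    · have h1 := (hmem _ _).mp hv (MulAut.conjNormal g⁻¹ y)
      rw [← map_smul, ← h1, ← Module.End.mul_apply, ← Module.End.mul_apply, ← map_mul, ← map_mul]
      simp [mul_assoc]
    · have : ρ g⁻¹ (ρ g v) = v := by simp
      rw [← this, h, map_zero]
  let _ : MulAction G X :=
    { smul := fun g ψ => ⟨fun y => ψ.1 (MulAut.conjNormal g⁻¹ y), hstab g ψ⟩
      one_smul := fun ψ => Subtype.ext (funext fun y => by
        change ψ.1 (MulAut.conjNormal 1⁻¹ y) = _
        simp)
      mul_smul := fun a b ψ => Subtype.ext (funext fun y => by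
        change ψ.1 (MulAut.conjNormal (a * b)⁻¹ y) =
          ψ.1 (MulAut.conjNormal b⁻¹ (MulAut.conjNormal a⁻¹ y))
        rw [mul_inv_rev, map_mul]; rfl) }
  let ψ : X := ⟨fun y => χ y, (Submodule.ne_bot_iff _).mpr
    ⟨w, (hmem _ _).mpr fun y => hχ y y.2, hw⟩⟩
  have h := derivedSeries_smul_eq hX hg ψ
  have h2 := congrFun (congrArg Subtype.val h) ⟨y, hy⟩
  change χ (MulAut.conjNormal g⁻¹ (⟨y, hy⟩ : N)) = χ y at h2
  simpa using h2

/-- Commuting operators over an algebraically closed field have a common eigenvector: they act as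
scalars on a minimal nonzero invariant subspace. -/
theorem exists_common_eigenvector [IsAlgClosed k] [FiniteDimensional k V] [Nontrivial V]
    (ρ : Representation k G V) (N : Subgroup G)
    (hcomm : ∀ x ∈ N, ∀ y ∈ N, Commute (ρ x) (ρ y)) :
    ∃ (χ : G → k) (w : V), w ≠ 0 ∧ ∀ y ∈ N, ρ y w = χ y • w := by
  let S : Set (Submodule k V) := {W | W ≠ ⊥ ∧ ∀ y ∈ N, ∀ v ∈ W, ρ y v ∈ W}
  obtain ⟨W, ⟨hW0, hWinv⟩, hmin⟩ := WellFounded.has_min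
    (wellFounded_lt (α := Submodule k V)) S ⟨⊤, top_ne_bot, by simp⟩
  have : Nontrivial W := Submodule.nontrivial_iff_ne_bot.mpr hW0
  have key : ∀ y, ∃ c : k, y ∈ N → ∀ v ∈ W, ρ y v = c • v := by
    intro y
    by_cases hy : y ∈ N
    · obtain ⟨c, hc⟩ := Module.End.exists_eigenvalue ((ρ y).restrict (hWinv y hy))
      obtain ⟨v, hv⟩ := hc.exists_hasEigenvector
      refine ⟨c, fun _ => ?_⟩
      let U := W ⊓ Module.End.eigenspace (ρ y) c
      have hU : U ∈ S := by
        refine ⟨(Submodule.ne_bot_iff _).mpr ⟨v, ⟨v.2, ?_⟩, ?_⟩, ?_⟩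
        · exact Module.End.mem_eigenspace_iff.mpr (congrArg Subtype.val hv.apply_eq_smul)
        · exact fun h => hv.2 (Subtype.ext h)
        · rintro z hz u ⟨hu1, hu2⟩
          refine ⟨hWinv z hz u hu1, ?_⟩
          exact Module.End.mapsTo_genEigenspace_of_comm (hcomm y hy z hz) c 1 hu2
      have hUW : U = W := by
        by_contra hne
        exact hmin U hU (lt_of_le_of_ne inf_le_left hne)
      intro u hu
      rw [← hUW] at hu
      exact Module.End.mem_eigenspace_iff.mp hu.2
    · exact ⟨0, fun h => absurd h hy⟩
  choose χ hχ using key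
  obtain ⟨w, hw, hw0⟩ := (Submodule.ne_bot_iff _).mp hW0
  exact ⟨χ, w, hw0, fun y hy => hχ y hy w hw⟩

/-! ### Derived length of soluble linear groups -/

/-- The element `g` acts on `V` as multiplication by a scalar. -/
def ActsAsScalar (ρ : Representation k G V) (g : G) : Prop :=
  ∃ c : k, ∀ v, ρ g v = c • v

theorem ActsAsScalar.commute {ρ : Representation k G V} {g : G} (hg : ActsAsScalar ρ g) (h : G) :
    Commute (ρ g) (ρ h) := by
  obtain ⟨c, hc⟩ := hg
  ext v
  simp [Module.End.mul_apply, hc]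

/-- A weight space of a normal subgroup with commuting, not entirely scalar, image is a proper nonzero
subspace invariant under `G^(m!)`. -/
theorem exists_invariant_of_commute [Group.IsSolvable G] [IsAlgClosed k] [FiniteDimensional k V]
    (ρ : Representation k G V) {m : ℕ} (hm : finrank k V ≤ m) (N : Subgroup G) [N.Normal]
    (hcomm : ∀ x ∈ N, ∀ y ∈ N, Commute (ρ x) (ρ y))
    {a : G} (haN : a ∈ N) (ha : ¬ ActsAsScalar ρ a) :
    ∃ U : Submodule k V, U ≠ ⊥ ∧ U ≠ ⊤ ∧
      ∀ g ∈ derivedSeries G m.factorial, ∀ v ∈ U, ρ g v ∈ U := by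
  have : Nontrivial V := by
    by_contra h
    rw [not_nontrivial_iff_subsingleton] at h
    exact ha ⟨0, fun v => Subsingleton.elim _ _⟩
  obtain ⟨χ, w, hw, hχ⟩ := exists_common_eigenvector ρ N hcomm
  let U : Submodule k V := ⨅ y : N, Module.End.eigenspace (ρ (y : G)) (χ y)
  have hmem : ∀ v, v ∈ U ↔ ∀ y ∈ N, ρ y v = χ y • v := by
    intro v
    simp [U, Submodule.mem_iInf]
  refine ⟨U, (Submodule.ne_bot_iff _).mpr ⟨w, (hmem w).mpr hχ, hw⟩, fun htop => ha ⟨χ a, ?_⟩, ?_⟩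
  · intro v
    exact (hmem v).mp (htop ▸ Submodule.mem_top) a haN
  · intro g hg v hv
    rw [hmem] at hv ⊢
    intro y hy
    have h1 := hv (g⁻¹ * y * g) (by
      simpa using ‹N.Normal›.conj_mem y hy g⁻¹)
    rw [weight_conj_eq ρ N hcomm hm χ w hw hχ hg hy] at h1
    rw [← map_smul, ← h1, ← Module.End.mul_apply, ← Module.End.mul_apply, ← map_mul, ← map_mul]
    simp [mul_assoc]

/-- Suppose that every normal subgroup with commuting image is scalar, and that `N` is normal with
scalar commutator subgroup. Then `G^(m! + 1)` commutes with `N`, where `m ≥ (dim V)²`. Indeed `N`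
acts on `End V` by commuting conjugations, and each `ρ x` with `x ∈ N` is a weight vector. As
`G^(m!)` fixes the weight, it preserves `ρ x` up to a scalar; commutators of such elements
centralise `ρ x`. -/
theorem commute_of_class_two [Group.IsSolvable G] [FiniteDimensional k V]
    (ρ : Representation k G V) {m : ℕ} (hm : finrank k V ^ 2 ≤ m) (N : Subgroup G) [N.Normal]
    (hab : ∀ M : Subgroup G, M.Normal → (∀ x ∈ M, ∀ y ∈ M, Commute (ρ x) (ρ y)) →
      ∀ x ∈ M, ActsAsScalar ρ x)
    (hN : ∀ g ∈ ⁅N, N⁆, ActsAsScalar ρ g)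
    {g : G} (hg : g ∈ derivedSeries G (m.factorial + 1)) {x : G} (hx : x ∈ N) :
    Commute (ρ g) (ρ x) := by
  have hnorm : N.Normal := inferInstance
  have hmulinv : ∀ h, ρ h * ρ h⁻¹ = 1 := fun h => by rw [← map_mul]; simp
  rcases subsingleton_or_nontrivial V with hV | hV
  · exact LinearMap.ext fun v => Subsingleton.elim _ _
  -- the elements of `N` whose image commutes with that of `N`
  let M : Subgroup G :=
    { carrier := {z | z ∈ N ∧ ∀ y ∈ N, Commute (ρ z) (ρ y)}
      one_mem' := ⟨N.one_mem, fun y _ => by simp⟩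
      mul_mem' := fun {a b} ha hb => ⟨N.mul_mem ha.1 hb.1, fun y hy => by
        rw [map_mul]; exact (ha.2 y hy).mul_left (hb.2 y hy)⟩
      inv_mem' := fun {a} ha => ⟨N.inv_mem ha.1, fun y hy => by
        have h := ha.2 y hy
        have e1 : ρ a⁻¹ * ρ a = 1 := by rw [← map_mul]; simp
        calc ρ a⁻¹ * ρ y = ρ a⁻¹ * (ρ y * ρ a) * ρ a⁻¹ := by
              simp only [mul_assoc, hmulinv, mul_one]
          _ = ρ a⁻¹ * (ρ a * ρ y) * ρ a⁻¹ := by rw [h.eq]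
          _ = ρ y * ρ a⁻¹ := by rw [← mul_assoc, e1, one_mul]⟩ }
  have hMnorm : M.Normal := by
    refine ⟨fun z hz h => ⟨hnorm.conj_mem z hz.1 h, fun y hy => ?_⟩⟩
    have h1 := hz.2 (h⁻¹ * y * h) (by simpa using hnorm.conj_mem y hy h⁻¹)
    have h2 := congrArg (fun t => ρ h * t * ρ h⁻¹) h1.eq
    simp only [← map_mul] at h2
    change ρ (h * z * h⁻¹) * ρ y = ρ y * ρ (h * z * h⁻¹)
    rw [← map_mul, ← map_mul]
    convert h2 using 2 <;> group
  have hMscal := hab M hMnorm (fun x hx y hy => hx.2 y hy.1)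
  -- the conjugation action of `G` on `End V`
  let σ := Representation.linHom ρ ρ
  have hσ : ∀ h (f : V →ₗ[k] V), σ h f = ρ h * f * ρ h⁻¹ := fun h f => rfl
  have hσ_commutator : ∀ h x (c : k), (∀ v, ρ ⁅h, x⁆ v = c • v) → σ h (ρ x) = c • ρ x := by
    intro h x c hc
    have : σ h (ρ x) = ρ ⁅h, x⁆ * ρ x := by
      rw [hσ, ← map_mul, ← map_mul, ← map_mul]; congr 1; group
    rw [this]
    ext v
    simp [Module.End.mul_apply, hc]
  have hσscal : ∀ h, ActsAsScalar ρ h → σ h = 1 := by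
    rintro h ⟨c, hc⟩
    ext f v
    rw [hσ]
    simp only [Module.End.mul_apply, hc, Module.End.one_apply]
    rw [← map_smul, ← hc, ← Module.End.mul_apply (ρ h), hmulinv]; rfl
  have hσcomm : ∀ x ∈ N, ∀ y ∈ N, Commute (σ x) (σ y) := by
    intro x hx y hy
    have h1 := hσscal _ (hN ⁅x, y⁆ (Subgroup.commutator_mem_commutator hx hy))
    have h2 : x * y = ⁅x, y⁆ * (y * x) := by group
    change σ x * σ y = σ y * σ x
    rw [← map_mul, h2, map_mul, h1, one_mul, map_mul]
  have hσm : finrank k (V →ₗ[k] V) ≤ m := by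
    rw [Module.finrank_linearMap, ← sq]; exact hm
  -- `ρ x` is a weight vector for `N`, the weight at `y` being the scalar by which `⁅y, x⁆` acts; as
  -- `g` fixes the weight, `ρ x` and its conjugate by `g` share it, so `⁅g, x⁆` lies in `M`
  have hK1 : ∀ g ∈ derivedSeries G m.factorial, ∀ x ∈ N, ActsAsScalar ρ ⁅g, x⁆ := by
    intro g hg x hx
    have hex : ∀ y, ∃ c : k, y ∈ N → σ y (ρ x) = c • ρ x := by
      intro y
      by_cases hy : y ∈ N
      · obtain ⟨c, hc⟩ := hN ⁅y, x⁆ (Subgroup.commutator_mem_commutator hy hx)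
        exact ⟨c, fun _ => hσ_commutator y x c hc⟩
      · exact ⟨0, fun h => absurd h hy⟩
    choose χ hχ using hex
    have hx0 : (ρ x : V →ₗ[k] V) ≠ 0 := by
      intro h0
      have := hmulinv x
      rw [h0, zero_mul] at this
      exact zero_ne_one this
    refine hMscal _ ⟨?_, fun y hy => ?_⟩
    · rw [commutatorElement_def]
      exact N.mul_mem (hnorm.conj_mem x hx g) (N.inv_mem hx)
    · have hw := weight_conj_eq σ N hσcomm hσm χ (ρ x) hx0 hχ hg hy
      have e1 := hχ y hy
      have e2 := hχ (g⁻¹ * y * g) (by simpa using hnorm.conj_mem y hy g⁻¹)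
      rw [hw] at e2
      rw [hσ] at e1 e2
      have b1 : ρ (y * x) = χ y • ρ (x * y) := by
        have := congrArg (fun t => t * ρ y) e1
        simp only [smul_mul_assoc, ← map_mul] at this
        convert this using 2; group
      have b2 : ρ (y * (g * x * g⁻¹)) = χ y • ρ (g * x * g⁻¹ * y) := by
        have := congrArg (fun t => ρ g * t * ρ (g⁻¹ * y)) e2
        simp only [smul_mul_assoc, mul_smul_comm, ← map_mul] at this
        convert this using 2
        · group
        · congr 1; group
      have b3 : ρ (⁅g, x⁆ * y * x) = ρ (y * ⁅g, x⁆ * x) := by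
        calc ρ (⁅g, x⁆ * y * x) = ρ ⁅g, x⁆ * ρ (y * x) := by rw [← map_mul, mul_assoc]
          _ = χ y • ρ (g * x * g⁻¹ * y) := by
              rw [b1, mul_smul_comm, ← map_mul]; congr 2; group
          _ = ρ (y * (g * x * g⁻¹)) := b2.symm
          _ = ρ (y * ⁅g, x⁆ * x) := by congr 1; group
      have b4 := congrArg (fun t => t * ρ x⁻¹) b3
      simp only [← map_mul, mul_inv_cancel_right] at b4
      rw [map_mul, map_mul] at b4
      exact b4
  -- `C` consists of the elements commuting with `ρ x`; it contains every commutator of two elements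
  -- that preserve `ρ x` up to a scalar under conjugation
  let C : Subgroup G := (Subgroup.centralizer {(Representation.asGroupHom ρ) x}).comap
    (Representation.asGroupHom ρ)
  have hC : ∀ h, h ∈ C ↔ Commute (ρ h) (ρ x) := by
    intro h
    simp only [C, Subgroup.mem_comap, Subgroup.mem_centralizer_singleton_iff]
    rw [Units.ext_iff]
    rfl
  suffices derivedSeries G (m.factorial + 1) ≤ C from (hC g).mp (this hg)
  rw [derivedSeries_succ, Subgroup.commutator_le]
  intro a ha b hb
  rw [hC]
  have hscal : ∀ h ∈ derivedSeries G m.factorial, ∃ c : k, σ h (ρ x) = c • ρ x := by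
    intro h hh
    obtain ⟨c, hc⟩ := hK1 h hh x hx
    exact ⟨c, hσ_commutator h x c hc⟩
  obtain ⟨α, hα⟩ := hscal a⁻¹ (Subgroup.inv_mem _ ha)
  obtain ⟨β, hβ⟩ := hscal b⁻¹ (Subgroup.inv_mem _ hb)
  have h1 : σ (a⁻¹ * b⁻¹) (ρ x) = σ (b⁻¹ * a⁻¹) (ρ x) := by
    rw [map_mul, map_mul, Module.End.mul_apply, Module.End.mul_apply, hα, hβ, map_smul, map_smul,
      hα, hβ, smul_comm]
  have h2 := congrArg (σ (a * b)) h1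
  rw [← Module.End.mul_apply, ← Module.End.mul_apply, ← map_mul, ← map_mul] at h2
  have e1 : a * b * (a⁻¹ * b⁻¹) = ⁅a, b⁆ := by group
  have e2 : a * b * (b⁻¹ * a⁻¹) = 1 := by group
  rw [e1, e2, map_one, Module.End.one_apply, hσ] at h2
  have h3 := congrArg (fun t => t * ρ ⁅a, b⁆) h2
  have e3 : ρ ⁅a, b⁆⁻¹ * ρ ⁅a, b⁆ = 1 := by rw [← map_mul, inv_mul_cancel, map_one]
  simp only [mul_assoc, e3, mul_one] at h3
  exact h3

/-- A soluble linear group that is not entirely scalar has a derived term, of index depending only on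
the degree, with a proper nonzero invariant subspace. -/
theorem exists_invariant [Group.IsSolvable G] [IsAlgClosed k] [FiniteDimensional k V]
    (ρ : Representation k G V) {n : ℕ} (hn : finrank k V ≤ n)
    (hns : ∃ g, ¬ ActsAsScalar ρ g) :
    ∃ U : Submodule k V, U ≠ ⊥ ∧ U ≠ ⊤ ∧
      ∀ g ∈ derivedSeries G ((n ^ 2).factorial + 1), ∀ v ∈ U, ρ g v ∈ U := by
  classical
  by_cases hab : ∀ M : Subgroup G, M.Normal → (∀ x ∈ M, ∀ y ∈ M, Commute (ρ x) (ρ y)) →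
      ∀ x ∈ M, ActsAsScalar ρ x
  -- the derived term of index `j` below is the last one that is not entirely scalar
  · have hex : ∃ i, ∀ g ∈ derivedSeries G i, ActsAsScalar ρ g := by
      obtain ⟨i, hi⟩ := (Group.isSolvable_def G).mp inferInstance
      refine ⟨i, fun g hg => ⟨1, fun v => ?_⟩⟩
      rw [hi, Subgroup.mem_bot] at hg
      simp [hg]
    obtain ⟨j, hj⟩ : ∃ j, Nat.find hex = j + 1 := by
      refine Nat.exists_eq_succ_of_ne_zero fun h0 => ?_
      obtain ⟨g, hg⟩ := hns
      have := Nat.find_spec hex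
      rw [h0] at this
      exact hg (this g (by simp))
    have hN : ∀ g ∈ ⁅derivedSeries G j, derivedSeries G j⁆, ActsAsScalar ρ g := by
      have := Nat.find_spec hex
      rwa [hj, derivedSeries_succ] at this
    have hNs := Nat.find_min hex (m := j) (by omega)
    push Not at hNs
    obtain ⟨y, hy, hys⟩ := hNs
    have : Nontrivial V := by
      by_contra h
      rw [not_nontrivial_iff_subsingleton] at h
      exact hys ⟨0, fun v => Subsingleton.elim _ _⟩
    obtain ⟨c, hc⟩ := Module.End.exists_eigenvalue (ρ y)
    refine ⟨Module.End.eigenspace (ρ y) c, hc, fun htop => hys ⟨c, fun v => ?_⟩, ?_⟩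
    · exact Module.End.mem_eigenspace_iff.mp (htop ▸ Submodule.mem_top)
    · intro g hg v hv
      have := commute_of_class_two ρ (Nat.pow_le_pow_left hn 2) (derivedSeries G j) hab hN hg hy
      exact Module.End.mapsTo_genEigenspace_of_comm this.symm c 1 hv
  · push Not at hab
    obtain ⟨M, hM, hcomm, a, ha, has⟩ := hab
    obtain ⟨U, h1, h2, h3⟩ := exists_invariant_of_commute ρ
      (hn.trans (Nat.le_self_pow two_ne_zero n)) M hcomm ha has
    exact ⟨U, h1, h2, fun g hg => h3 g (derivedSeries_antitone _ (Nat.le_succ _) hg)⟩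

/-- A bound for the derived length of soluble linear groups of degree `n`. -/
def linearBound : ℕ → ℕ
  | 0 => 0
  | n + 1 => ((n + 1) ^ 2).factorial + 1 + linearBound n + 1

universe u v w

/-- Zassenhaus: over an algebraically closed field, a soluble group acting on a space of dimension at
most `n` has image of derived length at most `linearBound n`. -/
theorem zassenhaus {k : Type u} [Field k] [IsAlgClosed k] (n : ℕ) :
    ∀ {G : Type v} {V : Type w} [Group G] [Group.IsSolvable G] [AddCommGroup V] [Module k V]
      [FiniteDimensional k V] (ρ : Representation k G V), finrank k V ≤ n →
      ∀ g ∈ derivedSeries G (linearBound n), ρ g = 1 := by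
  induction n with
  | zero =>
    intro G V _ _ _ _ _ ρ hn g _
    have : Subsingleton V := Module.finrank_zero_iff.mp (Nat.le_zero.mp hn)
    exact LinearMap.ext fun v => Subsingleton.elim _ _
  | succ n ih =>
    intro G V _ _ _ _ _ ρ hn g hg
    have hcomm : ∀ H : Subgroup G, (∀ a ∈ H, ∀ b ∈ H, ρ a * ρ b = ρ b * ρ a) →
        ∀ x ∈ ⁅H, H⁆, ρ x = 1 := by
      intro H hH x hx
      have hle : ⁅H, H⁆ ≤ (Representation.asGroupHom ρ).ker := by
        rw [Subgroup.commutator_le]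
        intro a ha b hb
        rw [MonoidHom.mem_ker, map_commutatorElement, commutatorElement_eq_one_iff_mul_comm]
        exact Units.ext (hH a ha b hb)
      exact congrArg Units.val (MonoidHom.mem_ker.mp (hle hx))
    by_cases hs : ∀ g, ActsAsScalar ρ g
    -- the final `+ 1` in `linearBound` covers the scalar case and the unitriangular step below
    · refine hcomm ⊤ (fun a _ b _ => (hs a).commute b) g ?_
      have h1 : g ∈ derivedSeries G 1 :=
        derivedSeries_antitone _ (by simp [linearBound]) hg
      rwa [derivedSeries_succ, derivedSeries_zero] at h1
    · push Not at hs
      obtain ⟨U, hU0, hU1, hU⟩ := exists_invariant ρ hn hs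
      let K := derivedSeries G (((n + 1) ^ 2).factorial + 1)
      have hUK : ∀ g : K, U ≤ U.comap ((ρ.comp K.subtype) g) := fun g v hv => hU g g.2 v hv
      have hdim : finrank k (V ⧸ U) + finrank k U = finrank k V := U.finrank_quotient_add_finrank
      have hUpos : 0 < finrank k U := by
        have := Submodule.nontrivial_iff_ne_bot.mpr hU0
        exact Module.finrank_pos
      have hUlt : finrank k U < finrank k V := Submodule.finrank_lt hU1
      have hsub : ∀ g ∈ derivedSeries G (((n + 1) ^ 2).factorial + 1 + linearBound n),
          (∀ v ∈ U, ρ g v = v) ∧ ∀ v, ρ g v - v ∈ U := by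
        intro g hg
        obtain ⟨h, hh, rfl⟩ := derivedSeries_add_le_map K le_rfl _ hg
        have h1 := ih (Representation.subrepresentation (ρ.comp K.subtype) U hUK) (by omega) h hh
        have h2 := ih (Representation.quotient (ρ.comp K.subtype) U hUK) (by omega) h hh
        refine ⟨fun v hv => ?_, fun v => ?_⟩
        · exact congrArg Subtype.val (LinearMap.congr_fun h1 ⟨v, hv⟩)
        · exact (Submodule.Quotient.eq U).mp (LinearMap.congr_fun h2 (Submodule.Quotient.mk v))
      refine hcomm _ (fun a ha b hb => LinearMap.ext fun v => ?_) g hg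
      obtain ⟨a1, a2⟩ := hsub a ha
      obtain ⟨b1, b2⟩ := hsub b hb
      have e1 := a1 _ (b2 v)
      have e2 := b1 _ (a2 v)
      rw [map_sub] at e1 e2
      rw [Module.End.mul_apply, Module.End.mul_apply, sub_eq_iff_eq_add.mp e1,
        sub_eq_iff_eq_add.mp e2]
      abel
end Rep

/-- The bound of `zassenhaus` over the prime field `𝔽_p`, by passing to the algebraic closure. -/
theorem zassenhaus_prime {p : ℕ} [Fact p.Prime] {G V : Type*} [Group G] [Group.IsSolvable G]
    [AddCommGroup V] [Module (ZMod p) V] [FiniteDimensional (ZMod p) V]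
    (ρ : Representation (ZMod p) G V) {n : ℕ} (hn : Module.finrank (ZMod p) V ≤ n) :
    ∀ g ∈ derivedSeries G (linearBound n), ρ g = 1 := by
  intro g hg
  let k := AlgebraicClosure (ZMod p)
  let ρ' : Representation k G (TensorProduct (ZMod p) k V) :=
    (Module.End.baseChangeHom (ZMod p) k V : _ →* _).comp ρ
  have h := zassenhaus n ρ' (by rwa [Module.finrank_baseChange]) g hg
  refine LinearMap.baseChangeHom_injective (ZMod p) V k ?_
  exact h.trans (map_one (Module.End.baseChangeHom (ZMod p) k V)).symm

/-! ### Elementary abelian sections of the commutator subgroup -/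

open scoped commutatorElement in
/-- Let `π` be a surjection from `N` onto a nonzero `𝔽_p`-space `V`, compatible with conjugation by
`G` through maps `act g` of `V`. Since `N` is generated by `r` elements, `dim V ≤ r`, so
`G^(linearBound r)` acts trivially on `V`; take `M = ker π`. -/
theorem exists_normal_lt_aux {G : Type*} [Group G] [Group.IsSolvable G] {r : ℕ}
    (hr : rankLE (commutator G) r) (N : Subgroup G) [hN : N.Normal] (hNG : N ≤ commutator G)
    {p : ℕ} [Fact p.Prime] {V : Type*} [AddCommGroup V] [Module (ZMod p) V] [Finite V]
    [Nontrivial V] (π : Additive N →+ V) (hπ : ∀ v, ∃ x : N, π (.ofMul x) = v) (act : G → V →+ V)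
    (hact : ∀ g (x : N), act g (π (.ofMul x)) = π (.ofMul (MulAut.conjNormal g x))) :
    ∃ M : Subgroup G, M.Normal ∧ M < N ∧ ⁅N, derivedSeries G (linearBound r)⁆ ≤ M := by
  classical
  let ρ : G →* Module.End (ZMod p) V :=
    { toFun := fun g => (act g).toZModLinearMap p
      map_one' := by
        ext v
        obtain ⟨x, rfl⟩ := hπ v
        simp [hact]
      map_mul' := fun a b => by
        ext v
        obtain ⟨x, rfl⟩ := hπ v
        simp [hact] }
  have hrank : Module.finrank (ZMod p) V ≤ r := by
    obtain ⟨S, hS, hSN⟩ := hr (N.subgroupOf (commutator G))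
    have hmemN : ∀ c ∈ Subgroup.closure (S : Set (commutator G)), (c : G) ∈ N := fun c hc =>
      Subgroup.mem_subgroupOf.mp (hSN ▸ hc)
    let T : Finset V := S.attach.image
      fun s => π (.ofMul ⟨s.1, hmemN _ (Subgroup.subset_closure s.2)⟩)
    have hspan : ∀ c (hc : c ∈ Subgroup.closure (S : Set (commutator G))),
        π (.ofMul ⟨c, hmemN c hc⟩) ∈ Submodule.span (ZMod p) (T : Set V) := by
      intro c hc
      induction hc using Subgroup.closure_induction with
      | mem s hs =>
        apply Submodule.subset_span
        exact Finset.mem_image.mpr ⟨⟨s, hs⟩, Finset.mem_attach _ _, rfl⟩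
      | one =>
        convert Submodule.zero_mem _
        exact map_zero π
      | mul a b ha hb iha ihb =>
        convert Submodule.add_mem _ iha ihb
        exact map_add π (.ofMul ⟨a, hmemN a ha⟩) (.ofMul ⟨b, hmemN b hb⟩)
      | inv a ha iha =>
        convert Submodule.neg_mem _ iha
        exact map_neg π (.ofMul ⟨a, hmemN a ha⟩)
    have htop : Submodule.span (ZMod p) (T : Set V) = ⊤ := by
      rw [eq_top_iff]
      intro v _
      obtain ⟨x, rfl⟩ := hπ v
      refine hspan ⟨x, hNG x.2⟩ ?_
      rw [hSN]
      exact Subgroup.mem_subgroupOf.mpr x.2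
    calc Module.finrank (ZMod p) V = (T : Set V).finrank (ZMod p) := by
          rw [Set.finrank, htop, finrank_top]
      _ ≤ T.card := finrank_span_finset_le_card T
      _ ≤ S.card := Finset.card_image_le.trans (Finset.card_attach).le
      _ ≤ r := hS
  have htriv := zassenhaus_prime ρ hrank
  let M₀ : Subgroup N := (AddMonoidHom.toMultiplicativeRight π).ker
  have hM₀ : ∀ x, x ∈ M₀ ↔ π (.ofMul x) = 0 := fun x => Iff.rfl
  refine ⟨M₀.map N.subtype, ⟨?_⟩, ?_, ?_⟩
  · rintro _ ⟨x, hx, rfl⟩ g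
    refine ⟨MulAut.conjNormal g x, ?_, by simp⟩
    rw [SetLike.mem_coe, hM₀, ← hact, (hM₀ x).mp hx, map_zero]
  · refine lt_of_le_of_ne (Subgroup.map_subtype_le _) fun h => ?_
    have htop : M₀ = ⊤ := by
      refine Subgroup.map_injective N.subtype_injective ?_
      rw [h, ← MonoidHom.range_eq_map, N.range_subtype]
    obtain ⟨q, hq⟩ := exists_ne (0 : V)
    obtain ⟨x, rfl⟩ := hπ q
    exact hq ((hM₀ x).mp (htop ▸ Subgroup.mem_top x))
  · rw [Subgroup.commutator_comm, Subgroup.commutator_le]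
    intro g hg x hx
    refine ⟨MulAut.conjNormal g ⟨x, hx⟩ * (⟨x, hx⟩ : N)⁻¹, ?_, by simp [commutatorElement_def]⟩
    have h1 : act g (π (.ofMul ⟨x, hx⟩)) = π (.ofMul ⟨x, hx⟩) :=
      LinearMap.congr_fun (htriv g hg) (π (.ofMul ⟨x, hx⟩))
    rw [SetLike.mem_coe, hM₀, ofMul_mul, ofMul_inv, map_add, map_neg, ← hact, h1, add_neg_cancel]

open scoped commutatorElement in
/-- A nontrivial normal subgroup `N` inside the commutator subgroup properly contains a normal
subgroup `M` of `G` modulo which `G^(linearBound r)` centralises it, namely `M = [N, N] N^p` with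
`p` a prime divisor of the order of the abelianization of `N`. -/
theorem exists_normal_lt {G : Type} [Group G] [Finite G] [Group.IsSolvable G] {r : ℕ}
    (hr : rankLE (commutator G) r) (N : Subgroup G) [hN : N.Normal] (hNG : N ≤ commutator G)
    (hN0 : N ≠ ⊥) :
    ∃ M : Subgroup G, M.Normal ∧ M < N ∧ ⁅N, derivedSeries G (linearBound r)⁆ ≤ M := by
  classical
  have : Nontrivial N := (Subgroup.nontrivial_iff_ne_bot N).mpr hN0
  let B := Abelianization N
  have hB : Nontrivial B := by
    by_contra h
    rw [not_nontrivial_iff_subsingleton] at h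
    refine (Group.IsSolvable.commutator_lt_top_of_nontrivial N).ne ?_
    rw [← Abelianization.ker_of, eq_top_iff]
    exact fun x _ => MonoidHom.mem_ker.mpr (Subsingleton.elim (α := B) _ _)
  have hBfin : Finite B := Finite.of_surjective _ (QuotientGroup.mk'_surjective _)
  obtain ⟨p, hp, hpB⟩ := Nat.exists_prime_and_dvd (Finite.one_lt_card (α := B)).ne'
  have : Fact p.Prime := ⟨hp⟩
  let P : Subgroup B := (powMonoidHom p : B →* B).range
  let Q := B ⧸ P
  -- otherwise the `p`-th power map on `B` would be surjective, hence injective, contrary to Cauchy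
  have hQ : Nontrivial Q := by
    by_contra h
    rw [not_nontrivial_iff_subsingleton, QuotientGroup.subsingleton_iff,
      MonoidHom.range_eq_top] at h
    have hinj := Finite.injective_iff_surjective.mpr h
    obtain ⟨b, hb⟩ := exists_prime_orderOf_dvd_card' p hpB
    have hb1 : b = 1 := hinj (by
      change b ^ p = 1 ^ p
      rw [one_pow, ← hb, pow_orderOf_eq_one])
    rw [hb1, orderOf_one] at hb
    exact hp.one_lt.ne hb
  let π : N →* Q := (QuotientGroup.mk' P).comp Abelianization.of
  have hπ : Function.Surjective π :=
    (QuotientGroup.mk'_surjective P).comp (QuotientGroup.mk'_surjective _)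
  let act : G → Q →* Q := fun g => QuotientGroup.map P P
    (Abelianization.map (MulAut.conjNormal g : MulAut N).toMonoidHom) (by
      rintro _ ⟨b, rfl⟩
      exact ⟨Abelianization.map (MulAut.conjNormal g : MulAut N).toMonoidHom b,
        (map_pow _ b p).symm⟩)
  have hact : ∀ g x, act g (π x) = π (MulAut.conjNormal g x) := fun g x => rfl
  have hpQ : ∀ q : Q, q ^ p = 1 := by
    intro q
    obtain ⟨x, rfl⟩ := hπ q
    rw [← map_pow]
    refine (QuotientGroup.eq_one_iff _).mpr ?_
    exact ⟨Abelianization.of x, (map_pow _ x p).symm⟩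
  let _ : Module (ZMod p) (Additive Q) :=
    AddCommGroup.zmodModule (n := p) fun v => congrArg Additive.ofMul (hpQ v.toMul)
  exact exists_normal_lt_aux hr N hNG (p := p) (V := Additive Q) π.toAdditive
    hπ (fun g => (act g).toAdditive) hact

/-! ### The Fitting series -/

/-- Some term of the lower central series of `H = G^(linearBound r + 1)` lies in `[G, G]`, and
`exists_normal_lt` shrinks any nontrivial normal subgroup of `G` containing such a term. -/
theorem isNilpotent_derivedSeries {G : Type} [Group G] [Finite G] [Group.IsSolvable G] {r : ℕ}
    (hr : rankLE (commutator G) r) :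
    Group.IsNilpotent (derivedSeries G (linearBound r + 1)) := by
  let H := derivedSeries G (linearBound r + 1)
  have key : ∀ N : Subgroup G, N.Normal → N ≤ commutator G →
      (∃ i, H.lowerCentralSeries i ≤ N) → ∃ i, H.lowerCentralSeries i = ⊥ := by
    intro N
    induction N using WellFoundedLT.induction with
    | _ N ih =>
      rintro hN hNG ⟨i, hi⟩
      by_cases hN0 : N = ⊥
      · exact ⟨i, le_bot_iff.mp (hN0 ▸ hi)⟩
      · obtain ⟨M, hM, hMN, hle⟩ := exists_normal_lt hr N hNG hN0
        refine ih M hMN hM (hMN.le.trans hNG) ⟨i + 1, ?_⟩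
        rw [Subgroup.lowerCentralSeries_succ]
        exact (Subgroup.commutator_mono hi (derivedSeries_antitone _ (Nat.le_succ _))).trans hle
  obtain ⟨i, hi⟩ := key (commutator G) inferInstance le_rfl ⟨0, by
    rw [Subgroup.lowerCentralSeries_zero, ← derivedSeries_one]
    exact derivedSeries_antitone _ (Nat.le_add_left _ _)⟩
  exact Subgroup.isNilpotent_of_lowerCentralSeries_eq_bot hi

/-- The series `⊥ ≤ G^(d) ≤ G^(d-1) ≤ ... ≤ G` has one nilpotent factor followed by `d` abelian ones.
At indices beyond `d + 1` the truncated subtraction keeps the series constantly `⊤`. -/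
theorem fittingHeightLE_of_isNilpotent_derivedSeries {G : Type} [Group G] {d : ℕ}
    (h : Group.IsNilpotent (derivedSeries G d)) : fittingHeightLE G (d + 1) := by
  have hnorm : ∀ i, (if i = 0 then (⊥ : Subgroup G) else derivedSeries G (d + 1 - i)).Normal := by
    intro i
    split_ifs <;> infer_instance
  refine ⟨fun i => if i = 0 then ⊥ else derivedSeries G (d + 1 - i), by simp, by simp, ?_,
    hnorm, ?_⟩
  · intro i
    rcases Nat.eq_zero_or_pos i with rfl | hi
    · simp
    · simp only [hi.ne', if_false, Nat.succ_ne_zero]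
      exact derivedSeries_antitone _ (by omega)
  · intro i
    have hsurj := ((QuotientGroup.mk' (if i = 0 then ⊥ else derivedSeries G (d + 1 - i))
      ).subgroupMap_surjective (if i + 1 = 0 then ⊥ else derivedSeries G (d + 1 - (i + 1))))
    rcases Nat.eq_zero_or_pos i with rfl | hi
    · have : Group.IsNilpotent ((if 0 + 1 = 0 then (⊥ : Subgroup G)
          else derivedSeries G (d + 1 - (0 + 1))) : Subgroup G) := h
      exact Group.nilpotent_of_surjective _ hsurj
    · have hle : ⁅derivedSeries G (d + 1 - (i + 1)), derivedSeries G (d + 1 - (i + 1))⁆ ≤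
          derivedSeries G (d + 1 - i) := by
        rw [← derivedSeries_succ]
        exact derivedSeries_antitone _ (by omega)
      refine Subgroup.isNilpotent_of_lowerCentralSeries_eq_bot (n := 1) ?_
      rw [Subgroup.lowerCentralSeries_succ, Subgroup.lowerCentralSeries_zero,
        ← Subgroup.map_commutator, Subgroup.map_eq_bot_iff, QuotientGroup.ker_mk']
      simpa [hi.ne'] using hle

theorem fitting_height_bounded_of_rank_derived :
    ∃ f : ℕ → ℕ, ∀ (r : ℕ), 0 < r →
      ∀ (G : Type) [Group G] [Finite G], IsSolvable G →
      rankLE ↥(commutator G) r →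
      fittingHeightLE G (f r) := by
  refine ⟨fun r => linearBound r + 1 + 1, fun r _ G _ _ hG hr => ?_⟩
  have : Group.IsSolvable G := hG
  exact fittingHeightLE_of_isNilpotent_derivedSeries (isNilpotent_derivedSeries hr)
end
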